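/- arXiv:1606.08432 — 5 statements merged into one kernel-verified Lean document; each statement's English description precedes it below -/
import Mathlib

section
/- Let p ≥ 5 be a prime and n a positive integer. Then α_{np} ≡ (p/3) · α_n (mod p²), where (p/3) denotes the Legendre symbol of p modulo 3. -/
/-- The Legendre symbol `(p/3)`: `1` if `p ≡ 1 (mod 3)` and `-1` if `p ≡ 2 (mod 3)`. -/
def leg3 (p : ℕ) : ℤ := if p % 3 = 1 then 1 else -1

/-- `α_m = ∑_{k=0}^{m-1} C(2k,k)`. -/
def alpha (m : ℕ) : ℤ := ∑ k ∈ Finset.range m, ((2 * k).choose k : ℤ)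

/-! Let `W = ∑ (t/3) Xᵗ = X / (1 + X + X²)`. Since `(1 + X)² W = X + X W`, the number `α_m` is
the coefficient of `X ^ m` in `(1 + X) ^ (2m) W`, so `α_{np}` is the coefficient of `Xⁿ` in
`U ((1 + X) ^ (2np) W)`, where `U` keeps the coefficients whose index is a multiple of `p`.

Write `(1 + X) ^ p = (1 + X ^ p) + D` with `p ∣ D` and expand the `2n`-th power to first order
in `D`. The main term is `U ((1 + X ^ p) ^ (2n) W) = (p/3) (1 + X) ^ (2n) W`, the remainder is
`U` of a multiple of `D²`, hence divisible by `p²`, and the linear term is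
`2n (1 + X) ^ (2n - 1) U (D W)`.
For odd `p`, `U (D W) = 0`: the relation `(t/3) + ((t+1)/3) + ((t+2)/3) = 0` shows that
multiplication by `1 + X` merely shifts and negates the coefficients of `W`. For `p = 2`, the
coefficient `2n` supplies the second factor `p`. -/

open PowerSeries

lemma natCast_dvd_map {A B F : Type*} [Semiring A] [Semiring B] [FunLike F A B]
    [AddMonoidHomClass F A B] (f : F) {a : ℕ} {x : A} (h : (a : A) ∣ x) : (a : B) ∣ f x := by
  obtain ⟨y, rfl⟩ := h
  exact ⟨f y, by rw [← nsmul_eq_mul, map_nsmul, nsmul_eq_mul]⟩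

section PowerSeriesOperators

variable {R : Type*}

lemma coeff_one_add_X_pow_eq_choose [CommSemiring R] (N k : ℕ) :
    coeff k ((1 + X : R⟦X⟧) ^ N) = N.choose k := by
  rw [← Polynomial.coeff_one_add_X_pow R N k, ← Polynomial.coeff_coe]
  simp

/-- Atkin's operator `U_p`, sending `∑ aₖ Xᵏ` to `∑ a_{pk} Xᵏ`; it extracts the coefficients at
multiples of `p`. -/
noncomputable def atkinU [Semiring R] (p : ℕ) : R⟦X⟧ →ₗ[R] R⟦X⟧ where
  toFun F := mk fun k ↦ coeff (p * k) F
  map_add' F G := by ext; simp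
  map_smul' a F := by ext; simp

@[simp]
lemma coeff_atkinU [Semiring R] (p k : ℕ) (F : R⟦X⟧) :
    coeff k (atkinU p F) = coeff (p * k) F := by
  simp [atkinU]

lemma atkinU_expand_mul [CommRing R] {p : ℕ} (hp : p ≠ 0) (F G : R⟦X⟧) :
    atkinU p (expand p hp F * G) = F * atkinU p G := by
  ext n
  simp only [coeff_atkinU, coeff_mul]
  symm
  refine Finset.sum_of_injOn (fun ij ↦ (p * ij.1, p * ij.2)) ?_ ?_ ?_ ?_
  · rintro ⟨i, j⟩ - ⟨i', j'⟩ - h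
    simpa [hp] using h
  · rintro ⟨i, j⟩ h
    simp only [Finset.mem_coe, Finset.HasAntidiagonal.mem_antidiagonal] at h ⊢
    rw [← mul_add, h]
  · rintro ⟨a, j⟩ h hnot
    suffices ¬ p ∣ a by rw [coeff_expand_of_not_dvd p hp F this, zero_mul]
    rintro ⟨i, rfl⟩
    have hsum : p * i + j = p * n := Finset.HasAntidiagonal.mem_antidiagonal.1 h
    obtain ⟨j, rfl⟩ := (Nat.dvd_add_right (dvd_mul_right p i)).1 (hsum ▸ dvd_mul_right p n)
    rw [← mul_add, mul_right_inj' hp] at hsum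
    exact hnot ⟨(i, j), by simpa using hsum, rfl⟩
  · rintro ⟨i, j⟩ -
    simp

/-- The failure `(1 + X) ^ p - (1 + X ^ p)` of `X ↦ X ^ p` to be the `p`-th power map on
`1 + X`. -/
noncomputable def frobeniusDefect (R : Type*) [CommRing R] (p : ℕ) : R⟦X⟧ :=
  (1 + X) ^ p - (1 + X ^ p)

lemma one_add_X_pow_eq_expand_add_frobeniusDefect [CommRing R] {p : ℕ} (hp : p ≠ 0) :
    (1 + X : R⟦X⟧) ^ p = expand p hp (1 + X) + frobeniusDefect R p := by
  simp [frobeniusDefect]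

lemma prime_dvd_frobeniusDefect [CommRing R] {p : ℕ} (hp : p.Prime) :
    (p : R⟦X⟧) ∣ frobeniusDefect R p := by
  obtain ⟨r, hr⟩ := exists_add_pow_prime_eq hp (1 : R⟦X⟧) X
  exact ⟨X * r, by rw [frobeniusDefect, hr]; ring⟩

end PowerSeriesOperators

lemma leg3_eq_legendreSym {p : ℕ} (h : ¬ 3 ∣ p) : leg3 p = legendreSym 3 p := by
  rw [legendreSym.mod, leg3]
  obtain h | h : p % 3 = 1 ∨ p % 3 = 2 := by omega
  · have : (p : ℤ) % (3 : ℕ) = 1 := by omega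
    rw [this, if_pos h]; decide
  · have : (p : ℤ) % (3 : ℕ) = 2 := by omega
    rw [this, if_neg (by omega)]; decide

lemma legendreSym_three_add_consecutive_eq_zero (t : ℤ) :
    legendreSym 3 t + legendreSym 3 (t + 1) + legendreSym 3 (t + 2) = 0 := by
  have key : ∀ x : ZMod 3, quadraticChar (ZMod 3) x + quadraticChar (ZMod 3) (x + 1) +
      quadraticChar (ZMod 3) (x + 2) = 0 := by decide
  simpa [legendreSym] using key t

/-- The generating function `∑ (t/3) Xᵗ = X / (1 + X + X²)` of the Legendre symbol modulo `3`. -/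
noncomputable def legendreSeries : ℤ⟦X⟧ := mk fun t ↦ legendreSym 3 t

@[simp]
lemma coeff_legendreSeries (t : ℕ) : coeff t legendreSeries = legendreSym 3 t :=
  coeff_mk t _

lemma one_add_X_add_X_sq_mul_legendreSeries : (1 + X + X ^ 2) * legendreSeries = X := by
  ext n
  rw [add_mul, add_mul, one_mul, map_add, map_add, coeff_X, pow_two, mul_assoc]
  match n with
  | 0 => simp
  | 1 => simp [coeff_succ_X_mul]
  | n + 2 =>
    simp only [coeff_succ_X_mul, coeff_legendreSeries]
    push_cast
    linear_combination legendreSym_three_add_consecutive_eq_zero n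

lemma one_add_X_sq_mul_legendreSeries :
    (1 + X) ^ 2 * legendreSeries = X + X * legendreSeries := by
  linear_combination one_add_X_add_X_sq_mul_legendreSeries

lemma coeff_one_add_X_pow_mul_legendreSeries {N n : ℕ} (h : N ≤ n) :
    coeff n ((1 + X) ^ N * legendreSeries) = (-1) ^ N * legendreSym 3 (n + N : ℕ) := by
  induction N generalizing n with
  | zero => simp
  | succ N ih =>
    obtain ⟨n, rfl⟩ := Nat.exists_eq_add_of_lt h
    rw [pow_succ', mul_assoc, add_mul, one_mul, map_add, coeff_succ_X_mul, ih (by omega),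
      ih (by omega)]
    have three_term := legendreSym_three_add_consecutive_eq_zero (N + n + N)
    push_cast
    ring_nf at three_term ⊢
    linear_combination (-1) ^ N * three_term

lemma atkinU_legendreSeries (p : ℕ) :
    atkinU p legendreSeries = C (legendreSym 3 p) * legendreSeries := by
  ext k
  rw [coeff_C_mul]
  simp [legendreSym.mul]

lemma alpha_succ (m : ℕ) : alpha (m + 1) = alpha m + (2 * m).choose m :=
  Finset.sum_range_succ _ m

lemma alpha_eq_coeff (m : ℕ) :
    alpha m = coeff m ((1 + X) ^ (2 * m) * legendreSeries) := by
  induction m with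
  | zero => simp [alpha]
  | succ m ih =>
    have expansion : (1 + X) ^ (2 * (m + 1)) * legendreSeries =
        X * ((1 + X) ^ (2 * m) + (1 + X) ^ (2 * m) * legendreSeries) := by
      rw [mul_add_one, pow_add, mul_assoc, one_add_X_sq_mul_legendreSeries]
      ring
    rw [expansion, coeff_succ_X_mul, map_add, coeff_one_add_X_pow_eq_choose, ← ih, alpha_succ,
      add_comm]

lemma atkinU_frobeniusDefect_mul_legendreSeries {p : ℕ} (hp : Odd p) :
    atkinU p (frobeniusDefect ℤ p * legendreSeries) = 0 := by
  ext k
  rw [coeff_atkinU, frobeniusDefect, sub_mul, add_mul, one_mul, map_sub, map_add, map_zero]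
  cases k with
  | zero => simp [legendreSeries, hp.pos.ne']
  | succ k =>
    rw [coeff_one_add_X_pow_mul_legendreSeries (Nat.le_mul_of_pos_right p k.succ_pos),
      hp.neg_one_pow, coeff_legendreSeries, mul_add_one, coeff_X_pow_mul, coeff_legendreSeries]
    have three_term : legendreSym 3 (p * k) + legendreSym 3 (p * (k + 1)) +
        legendreSym 3 (p * (k + 2)) = 0 := by
      simp only [legendreSym.mul 3 (p : ℤ), ← mul_add, legendreSym_three_add_consecutive_eq_zero,
        mul_zero]
    push_cast
    ring_nf at three_term ⊢
    linear_combination -three_term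

lemma sq_dvd_two_mul_atkinU_frobeniusDefect_mul_legendreSeries {p : ℕ} (hp : p.Prime) :
    ((p ^ 2 : ℕ) : ℤ⟦X⟧) ∣ 2 * atkinU p (frobeniusDefect ℤ p * legendreSeries) := by
  obtain rfl | hodd := hp.eq_two_or_odd'
  · rw [pow_two, Nat.cast_mul]
    exact mul_dvd_mul_left 2
      (natCast_dvd_map (atkinU 2) ((prime_dvd_frobeniusDefect hp).mul_right _))
  · simp [atkinU_frobeniusDefect_mul_legendreSeries hodd]

lemma sq_dvd_atkinU_one_add_X_pow_mul_legendreSeries_sub {p : ℕ} (hp : p.Prime) (n : ℕ) :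
    ((p ^ 2 : ℕ) : ℤ⟦X⟧) ∣ atkinU p ((1 + X) ^ (2 * (n * p)) * legendreSeries) -
      C (legendreSym 3 p) * ((1 + X) ^ (2 * n) * legendreSeries) := by
  have defect_dvd := sq_dvd_two_mul_atkinU_frobeniusDefect_mul_legendreSeries hp
  set D := frobeniusDefect ℤ p
  set E := expand p hp.ne_zero (1 + X : ℤ⟦X⟧)
  obtain ⟨K, hK⟩ := Polynomial.powAddExpansion E D (2 * n)
  have taylor : (1 + X) ^ (2 * (n * p)) * legendreSeries =
      E ^ (2 * n) * legendreSeries + (2 * n) • (E ^ (2 * n - 1) * (D * legendreSeries)) +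
        D ^ 2 * (K * legendreSeries) := by
    rw [show 2 * (n * p) = p * (2 * n) by ring, pow_mul,
      one_add_X_pow_eq_expand_add_frobeniusDefect hp.ne_zero, hK, nsmul_eq_mul]
    ring
  have main_term : atkinU p (E ^ (2 * n) * legendreSeries) =
      C (legendreSym 3 p) * ((1 + X) ^ (2 * n) * legendreSeries) := by
    rw [← map_pow, atkinU_expand_mul, atkinU_legendreSeries, mul_left_comm]
  have linear_term : ((p ^ 2 : ℕ) : ℤ⟦X⟧) ∣
      (2 * n) • atkinU p (E ^ (2 * n - 1) * (D * legendreSeries)) := by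
    rw [← map_pow, atkinU_expand_mul, nsmul_eq_mul]
    refine (defect_dvd.mul_left ((n : ℤ⟦X⟧) * (1 + X) ^ (2 * n - 1))).trans (dvd_of_eq ?_)
    push_cast
    ring
  have remainder : ((p ^ 2 : ℕ) : ℤ⟦X⟧) ∣ atkinU p (D ^ 2 * (K * legendreSeries)) := by
    refine natCast_dvd_map (atkinU p) (Dvd.dvd.mul_right ?_ _)
    rw [Nat.cast_pow]
    exact pow_dvd_pow_of_dvd (prime_dvd_frobeniusDefect hp) 2
  rw [taylor, map_add, map_add, map_nsmul, main_term, add_assoc, add_sub_cancel_left]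
  exact dvd_add linear_term remainder

theorem alpha_supercongruence_general (p n : ℕ) (hp : p.Prime) :
    alpha (n * p) ≡ legendreSym 3 p * alpha n [ZMOD (p : ℤ) ^ 2] := by
  have h := natCast_dvd_map (coeff n) (sq_dvd_atkinU_one_add_X_pow_mul_legendreSeries_sub hp n)
  rw [map_sub, coeff_atkinU, coeff_C_mul, mul_comm p n, ← alpha_eq_coeff, ← alpha_eq_coeff,
    Nat.cast_pow] at h
  exact (Int.modEq_iff_dvd.2 h).symm

theorem alpha_supercongruence (p n : ℕ) (hp : p.Prime) (hp5 : 5 ≤ p) (hn : 0 < n) :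
    alpha (n * p) ≡ leg3 p * alpha n [ZMOD (p : ℤ) ^ 2] := by
  have h3 : ¬ 3 ∣ p := by rw [Nat.prime_dvd_prime_iff_eq Nat.prime_three hp]; omega
  simpa only [leg3_eq_legendreSym h3] using alpha_supercongruence_general p n hp
end

section
/- Let p ≥ 5 be a prime with p ≡ 1 (mod 3) and let n be a positive integer. Then β_{np} ≡ β_n (mod p²). -/
/-- Congruence of rational numbers modulo `p^m`: `a ≡ b (mod p^m)` means
`a - b = p^m · (s/t)` with `p` not dividing `t`. -/
def ratCongr (p m : ℕ) (a b : ℚ) : Prop :=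
  ∃ s t : ℤ, ¬ ((p : ℤ) ∣ t) ∧ (a - b) * (t : ℚ) = (p : ℚ) ^ m * (s : ℚ)

/-- `β_m = ∑_{k=0}^{m-1} C(2k,k)/(k+1)`. -/
def beta (m : ℕ) : ℚ := ∑ k ∈ Finset.range m, ((2 * k).choose k : ℚ) / (k + 1)

/-!
The Catalan number `C(2k,k) - C(2k,k-1)` is the coefficient of `X ^ k` in `(1 + X) ^ (2k) (1 - X)`,
so summing a geometric series in `X / (1 + X)²` gives `β_m = [X ^ m] (1 + X) ^ (2m) W` with
`W = X (1 - X) / (1 + X + X²)`. Let `U` keep the coefficients whose index is a multiple of `p`.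
Since `W + 1` has coefficients of period 3 and `p ≡ 1 (mod 3)`, `U W = W`.

Write `(1 + X) ^ p = (1 + X ^ p) + D`, where `p ∣ D`. Modulo `p²`,
`(1 + X) ^ (2np) W ≡ (1 + X ^ p) ^ (2n) W + 2n (1 + X ^ p) ^ (2n - 1) D W`.
Because `p ≡ 1 (mod 6)`, `D` vanishes at the primitive cube roots of unity, so `D W` is a
polynomial; it has degree less than `p` and no constant term, so `U (D W) = 0`. As
`U (f(X ^ p) g) = f U g`, applying `U` leaves `(1 + X) ^ (2n) W`, whose `n`-th coefficient is `β_n`.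
-/

theorem ratCongr_intCast_of_modEq {p m : ℕ} (hp : p ≠ 1) {a b : ℤ}
    (h : a ≡ b [ZMOD (p : ℤ) ^ m]) : ratCongr p m a b := by
  obtain ⟨s, hs⟩ := h.symm.dvd
  refine ⟨s, 1, fun hp1 => hp (by exact_mod_cast Int.eq_one_of_dvd_one (by positivity) hp1), ?_⟩
  rw [Int.cast_one, mul_one]
  exact_mod_cast hs

theorem beta_eq_sum_catalan (m : ℕ) :
    beta m = ((∑ k ∈ Finset.range m, (catalan k : ℤ) : ℤ) : ℚ) := by
  rw [beta, Int.cast_sum]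
  refine Finset.sum_congr rfl fun k _ => ?_
  rw [div_eq_iff (by positivity), ← Nat.centralBinom_eq_two_mul_choose,
    ← succ_mul_catalan_eq_centralBinom]
  push_cast
  ring

theorem catalan_succ_add_choose (n : ℕ) :
    catalan (n + 1) + (2 * (n + 1)).choose n = (n + 1).centralBinom := by
  have hcatalan := succ_mul_catalan_eq_centralBinom (n + 1)
  have hchoose := Nat.choose_succ_right_eq (2 * (n + 1)) n
  rw [← Nat.centralBinom_eq_two_mul_choose, show 2 * (n + 1) - n = n + 2 by omega] at hchoose
  apply Nat.eq_of_mul_eq_mul_left (show 0 < n + 2 by omega)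
  linear_combination hcatalan - hchoose

section Divisibility

variable {R : Type*} [CommRing R]

theorem one_add_add_sq_dvd_one_add_pow_sub {p : ℕ} (hp : p % 6 = 1) (x : R) :
    1 + x + x ^ 2 ∣ (1 + x) ^ p - (1 + x ^ p) := by
  obtain ⟨k, rfl⟩ : ∃ k, p = 6 * k + 1 := ⟨p / 6, by omega⟩
  have dvd_one_add_pow : 1 + x + x ^ 2 ∣ ((1 + x) ^ 6) ^ k - 1 ^ k :=
    Dvd.dvd.trans ⟨x * (x ^ 2 + 3 * x + 3) * (x + 2), by ring⟩ (sub_dvd_pow_sub_pow _ _ k)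
  have dvd_pow : 1 + x + x ^ 2 ∣ (x ^ 6) ^ k - 1 ^ k :=
    Dvd.dvd.trans ⟨(x - 1) * (x ^ 3 + 1), by ring⟩ (sub_dvd_pow_sub_pow _ _ k)
  convert (dvd_one_add_pow.mul_left (1 + x)).sub (dvd_pow.mul_left x) using 1
  rw [pow_succ, pow_succ, pow_mul, pow_mul, one_pow]
  ring

theorem natCast_dvd_one_add_pow_sub {p : ℕ} (hp : p.Prime) (x : R) :
    (p : R) ∣ (1 + x) ^ p - (1 + x ^ p) := by
  obtain ⟨r, hr⟩ := exists_add_pow_prime_eq hp 1 x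
  exact ⟨x * r, by rw [hr]; ring⟩

end Divisibility

section Degree

open Polynomial

theorem degree_one_add_X_pow_sub_lt {R : Type*} [Ring R] {p : ℕ} (hp : p ≠ 0) :
    ((1 + X) ^ p - (1 + X ^ p) : R[X]).degree < p := by
  rw [degree_lt_iff_coeff_zero]
  intro i hi
  have hi0 : i ≠ 0 := by omega
  rcases hi.eq_or_lt with rfl | hlt
  · simp [coeff_one_add_X_pow, coeff_one, hi0]
  · simp [coeff_one_add_X_pow, coeff_one, coeff_X_pow, hi0, hlt.ne', Nat.choose_eq_zero_of_lt hlt]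

theorem degree_mul_le_degree_mul_of_monic {R : Type*} [Semiring R] {f g : R[X]} (hg : g.Monic)
    (hfg : f.degree ≤ g.degree) (h : R[X]) : (h * f).degree ≤ (h * g).degree := by
  rw [hg.degree_mul]
  exact (degree_mul_le h f).trans (by gcongr)

end Degree

open PowerSeries

section Decimate

variable {R : Type*} [Semiring R]

/-- The operator `U_p : ∑ aᵢ Xⁱ ↦ ∑ a_{ip} Xⁱ` on power series, which keeps every `p`-th
coefficient. -/
noncomputable def decimate (p : ℕ) : R⟦X⟧ →ₗ[R] R⟦X⟧ where
  toFun f := mk fun i => coeff (i * p) f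
  map_add' f g := by ext; simp
  map_smul' c f := by ext; simp

@[simp]
theorem coeff_decimate (p i : ℕ) (f : R⟦X⟧) : coeff i (decimate p f) = coeff (i * p) f :=
  coeff_mk _ fun i => coeff (i * p) f

theorem decimate_coe_eq_zero {p : ℕ} {f : Polynomial R} (hconst : f.coeff 0 = 0)
    (hdegree : f.degree < p) : decimate p (f : R⟦X⟧) = 0 := by
  ext i
  rw [coeff_decimate, Polynomial.coeff_coe, map_zero]
  rcases i.eq_zero_or_pos with rfl | hi
  · rwa [zero_mul]
  · refine Polynomial.coeff_eq_zero_of_degree_lt (hdegree.trans_le ?_)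
    exact_mod_cast Nat.le_mul_of_pos_left p hi

end Decimate

section DecimateMul

variable {R : Type*} [CommRing R]

theorem decimate_expand_mul {p : ℕ} (hp : p ≠ 0) (f g : R⟦X⟧) :
    decimate p (expand p hp f * g) = f * decimate p g := by
  ext n
  rw [coeff_decimate, coeff_mul, coeff_mul]
  symm
  refine Finset.sum_of_injOn (fun ij => (ij.1 * p, ij.2 * p)) ?_ ?_ ?_ ?_
  · intro ij _ kl _ h
    simpa [Prod.ext_iff, hp] using h
  · intro ij hij
    have hsum : ij.1 + ij.2 = n := by simpa using hij
    simp [← add_mul, hsum]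
  · rintro ⟨i, j⟩ hij hnotin
    have hsum : i + j = n * p := by simpa using hij
    rw [coeff_expand_of_not_dvd, zero_mul]
    intro hpi
    obtain ⟨l, rfl⟩ : p ∣ j := (Nat.dvd_add_right hpi).1 (hsum ▸ dvd_mul_left p n)
    obtain ⟨k, rfl⟩ := hpi
    have hkl : k + l = n := Nat.eq_of_mul_eq_mul_left (Nat.pos_of_ne_zero hp) (by linarith)
    exact hnotin ⟨(k, l), by simpa using hkl, by simp [mul_comm]⟩
  · intro ij _
    rw [coeff_decimate, mul_comm ij.1 p, coeff_expand_mul]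

theorem sq_dvd_decimate_one_add_X_pow_mul_sub {p : ℕ} (hp : p.Prime) {f : R⟦X⟧}
    (hf : decimate p (((1 + X) ^ p - (1 + X ^ p)) * f) = 0) (n : ℕ) :
    (p : R⟦X⟧) ^ 2 ∣ decimate p ((1 + X) ^ (n * p) * f) - (1 + X) ^ n * decimate p f := by
  set d : R⟦X⟧ := (1 + X) ^ p - (1 + X ^ p) with hd
  have hexpand : expand p hp.ne_zero (1 + X) = (1 + X ^ p : R⟦X⟧) := by simp
  have hpow : ((1 + X) ^ (n * p) : R⟦X⟧) = (expand p hp.ne_zero (1 + X) + d) ^ n := by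
    rw [hexpand, hd, add_sub_cancel, mul_comm, pow_mul]
  obtain ⟨c, hc⟩ := (pow_dvd_pow_of_dvd (natCast_dvd_one_add_pow_sub hp X) 2).trans
    (sq_dvd_add_pow_sub_sub d (expand p hp.ne_zero (1 + X)) n)
  have hexpansion : (1 + X) ^ (n * p) * f = expand p hp.ne_zero ((1 + X) ^ n) * f
      + expand p hp.ne_zero ((1 + X) ^ (n - 1) * (n : R⟦X⟧)) * (d * f)
      + expand p hp.ne_zero ((p : R⟦X⟧) ^ 2) * (c * f) := by
    rw [hpow]
    simp only [map_pow, map_mul, map_natCast]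
    linear_combination f * hc
  refine ⟨decimate p (c * f), ?_⟩
  simp only [hexpansion, map_add, decimate_expand_mul, hf]
  ring

end DecimateMul

/-- The power series `X (1 - X) / (1 + X + X ^ 2) = X - 2 X ^ 2 + X ^ 3 + X ^ 4 - 2 X ^ 5 + ⋯`, for
which `β_m` is the coefficient of `X ^ m` in `(1 + X) ^ (2 * m) * betaKernel`. It is encoded by its
coefficients, which have period 3 apart from the constant one. -/
def betaKernel : ℤ⟦X⟧ := mk fun i => if i = 0 then 0 else if i % 3 = 2 then -2 else 1

theorem one_add_X_add_X_sq_mul_betaKernel : (1 + X + X ^ 2) * betaKernel = X * (1 - X) := by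
  have hHorner : (1 + X + X ^ 2) * betaKernel = betaKernel + X * (betaKernel + X * betaKernel) := by
    ring
  rw [hHorner]
  ext (_ | _ | _ | i)
  · simp [betaKernel]
  · simp [betaKernel, coeff_succ_X_mul]
  · simp [betaKernel, coeff_succ_X_mul, coeff_one]
  · simp only [betaKernel, map_add, map_sub, coeff_succ_X_mul, coeff_mk, coeff_one, coeff_X]
    grind

theorem decimate_betaKernel {p : ℕ} (hp : p % 3 = 1) : decimate p betaKernel = betaKernel := by
  have hp0 : p ≠ 0 := by rintro rfl; contradiction
  ext i
  simp [betaKernel, Nat.mul_mod, hp, hp0]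

theorem coeff_one_add_X_pow_mul_one_sub_X (R : Type*) [CommRing R] (n : ℕ) :
    coeff n ((1 + X) ^ (2 * n) * (1 - X) : R⟦X⟧) = catalan n := by
  have hcoeff (N k : ℕ) : coeff k ((1 + X) ^ N : R⟦X⟧) = N.choose k := by
    rw [← Polynomial.coeff_one_add_X_pow R N k, ← Polynomial.coeff_coe]
    push_cast
    rfl
  rw [mul_one_sub, map_sub]
  rcases n with _ | n
  · simp
  · rw [coeff_succ_mul_X, hcoeff, hcoeff, ← Nat.centralBinom_eq_two_mul_choose,
      ← catalan_succ_add_choose]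
    push_cast
    ring

theorem sum_catalan_eq_coeff (m : ℕ) :
    ∑ k ∈ Finset.range m, (catalan k : ℤ) = coeff m ((1 + X) ^ (2 * m) * betaKernel) := by
  induction m with
  | zero => simp [betaKernel]
  | succ m ih =>
    have hrec : (1 + X) ^ (2 * (m + 1)) * betaKernel
        = X * ((1 + X) ^ (2 * m) * betaKernel + (1 + X) ^ (2 * m) * (1 - X)) := by
      linear_combination (1 + X) ^ (2 * m) * one_add_X_add_X_sq_mul_betaKernel
    rw [Finset.sum_range_succ, ih, hrec, coeff_succ_X_mul, map_add,
      coeff_one_add_X_pow_mul_one_sub_X]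

theorem decimate_one_add_X_pow_sub_mul_betaKernel {p : ℕ} (hp : p % 6 = 1) :
    decimate p (((1 + X) ^ p - (1 + X ^ p)) * betaKernel) = 0 := by
  obtain ⟨q, hq⟩ := one_add_add_sq_dvd_one_add_pow_sub hp (Polynomial.X : Polynomial ℤ)
  have hcoe : ((1 + X) ^ p - (1 + X ^ p)) * betaKernel
      = ((q * (Polynomial.X * (1 - Polynomial.X)) : Polynomial ℤ) : ℤ⟦X⟧) := by
    have hq' := congrArg (fun f : Polynomial ℤ => (f : ℤ⟦X⟧)) hq
    push_cast at hq' ⊢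
    linear_combination betaKernel * hq' + (q : ℤ⟦X⟧) * one_add_X_add_X_sq_mul_betaKernel
  rw [hcoe]
  refine decimate_coe_eq_zero (by simp [Polynomial.mul_coeff_zero]) ?_
  have hdegree : (1 + Polynomial.X + Polynomial.X ^ 2 : Polynomial ℤ).degree = 2 := by
    compute_degree!
  have hmonic : (1 + Polynomial.X + Polynomial.X ^ 2 : Polynomial ℤ).Monic := by
    monicity!
  rw [mul_comm _ q] at hq
  refine (degree_mul_le_degree_mul_of_monic hmonic ?_ q).trans_lt
    (hq ▸ degree_one_add_X_pow_sub_lt ?_)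
  · rw [hdegree]
    compute_degree
  · rintro rfl
    contradiction

theorem sum_catalan_mul_prime_modEq {p : ℕ} (hp : p.Prime) (hp3 : p % 3 = 1) (n : ℕ) :
    ∑ k ∈ Finset.range (n * p), (catalan k : ℤ) ≡ ∑ k ∈ Finset.range n, (catalan k : ℤ)
      [ZMOD (p : ℤ) ^ 2] := by
  have hp6 : p % 6 = 1 := by
    rcases hp.eq_two_or_odd with rfl | hodd
    · contradiction
    · omega
  obtain ⟨c, hc⟩ := sq_dvd_decimate_one_add_X_pow_mul_sub hp
    (decimate_one_add_X_pow_sub_mul_betaKernel hp6) (2 * n)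
  have hcoeff := congrArg (coeff n) hc
  rw [decimate_betaKernel hp3, map_sub, coeff_decimate, mul_assoc 2 n p, ← Nat.cast_pow,
    ← nsmul_eq_mul, map_nsmul, ← sum_catalan_eq_coeff, ← sum_catalan_eq_coeff] at hcoeff
  exact (Int.modEq_of_dvd ⟨coeff n c, by simpa using hcoeff⟩).symm

theorem beta_supercongruence_one_mod_three (p n : ℕ) (hp : p.Prime) (hp5 : 5 ≤ p)
    (hp3 : p % 3 = 1) (hn : 0 < n) :
    ratCongr p 2 (beta (n * p)) (beta n) := by
  rw [beta_eq_sum_catalan, beta_eq_sum_catalan]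
  exact ratCongr_intCast_of_modEq hp.ne_one (sum_catalan_mul_prime_modEq hp hp3 n)
end

section
/- Let p ≥ 5 be a prime with p ≡ 2 (mod 3) and let n be a positive integer. Then β_{np} ≡ -γ_n (mod p²). -/
/-- `γ_m = ∑_{k=0}^{m-1} C(2k,k)·(3k+2)/(k+1)`. -/
def gamma (m : ℕ) : ℚ :=
  ∑ k ∈ Finset.range m, ((2 * k).choose k : ℚ) * (3 * k + 2) / (k + 1)

/-!
Let `E` be the shift on sequences indexed by `ℤ`, let `v` be a `3`-periodic sequence with
`v + E v + E² v = 0`, and let `w` agree with `v` at positive indices and vanish elsewhere. Then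
`(1 + E)² w = E (w + v₁ δ₀ - v₀ δ₁)`, so that `((1 + E) ^ (2N) w)(-N)` is the sum over `k < N` of
`v₁ C(2k, k) - v₀ C(2k, k+1)`. This is `β_N` for `v = (1, 1, -2)` and `-γ_N` for `v = (1, -2, 1)`,
and `j ↦ v (p j)` exchanges the two when `p ≡ 2 (mod 3)`.

Put `D = (1 + E) ^ p - (1 + E ^ p)`. As `p ∣ D`, modulo `p²`
`(1 + E) ^ (2np) ≡ (1 + E ^ p) ^ (2n) + 2n (1 + E ^ p) ^ (2n-1) D`.
At `-np`, the first term only sees the values of `w` at multiples of `p`, which gives the sum for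
`n` and `j ↦ v (p j)`. The second term only sees `D w` at multiples of `p`. There it vanishes:
to the left of the origin because `w` does, and to the right because `(1 + E) v = -E² v` gives
`D v = -(v + E ^ p v + E ^ (2p) v) = 0` for `p` odd and prime to `3`.
-/

lemma ratCongr_intCast {p m : ℕ} (hp : p ≠ 1) {a b : ℤ} (h : (p : ℤ) ^ m ∣ a - b) :
    ratCongr p m a b := by
  obtain ⟨s, hs⟩ := h
  refine ⟨s, 1, ?_, ?_⟩
  · exact_mod_cast mt Nat.dvd_one.mp hp
  · rw [Int.cast_one, mul_one]
    exact_mod_cast hs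

lemma exists_add_pow_prime_mul_eq {A : Type*} [CommRing A] {p : ℕ} (hp : p.Prime) (x y : A)
    (m : ℕ) :
    ∃ q : A, (x + y) ^ (p * m) = (x ^ p + y ^ p) ^ m +
      m * (x ^ p + y ^ p) ^ (m - 1) * ((x + y) ^ p - (x ^ p + y ^ p)) + p ^ 2 * q := by
  obtain ⟨r, hr⟩ := exists_add_pow_prime_eq hp x y
  obtain ⟨k, hk⟩ := Polynomial.powAddExpansion (x ^ p + y ^ p) ((x + y) ^ p - (x ^ p + y ^ p)) m
  refine ⟨k * (x * y * r) ^ 2, ?_⟩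
  rw [pow_mul, ← add_sub_cancel (x ^ p + y ^ p) ((x + y) ^ p), hk, add_sub_cancel, hr]
  ring

lemma sum_arithmetic_progression_eq_zero {M : Type*} [AddCommMonoid M] {v : ZMod 3 → M}
    (hv : ∑ i, v i = 0) {d : ZMod 3} (hd : d ≠ 0) (x : ZMod 3) :
    v x + v (x + d) + v (x + 2 * d) = 0 := by
  rw [← hv, ← Equiv.sum_comp ((Equiv.mulLeft₀ d hd).trans (Equiv.addLeft x))]
  refine Eq.symm ((Fin.sum_univ_three _).trans ?_)
  change v (x + d * 0) + v (x + d * 1) + v (x + d * 2) = _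
  ring_nf

section HalfRowSum

variable {R : Type*} [CommRing R] {v : ZMod 3 → R}

variable (R) in
/-- The operator `E` on sequences indexed by `ℤ` with `(E f)(j) = f (j + 1)`. -/
def shift : Module.End R (ℤ → R) := LinearMap.funLeft R R (· + 1)

lemma shift_apply (f : ℤ → R) (j : ℤ) : shift R f j = f (j + 1) := rfl

lemma shift_pow_apply (k : ℕ) (f : ℤ → R) (j : ℤ) : (shift R ^ k) f j = f (j + k) := by
  induction k generalizing j with
  | zero => simp
  | succ k ih =>
    rw [pow_succ', Module.End.mul_apply, shift_apply, ih]
    congr 1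
    push_cast
    ring

lemma one_add_shift_pow_apply (m : ℕ) (f : ℤ → R) (j : ℤ) :
    ((1 + shift R) ^ m) f j = ∑ k ∈ Finset.range (m + 1), (m.choose k : R) * f (j + k) := by
  rw [add_comm, (Commute.one_right (shift R)).add_pow, LinearMap.sum_apply, Finset.sum_apply]
  refine Finset.sum_congr rfl fun k _ => ?_
  rw [one_pow, mul_one, ← (Nat.cast_commute _ _).eq, ← nsmul_eq_mul, LinearMap.smul_apply,
    Pi.smul_apply, shift_pow_apply, nsmul_eq_mul]

lemma one_add_shift_pow_single (m k : ℕ) (j : ℤ) :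
    ((1 + shift R) ^ m) (Pi.single (j + k) 1) j = m.choose k := by
  simp only [one_add_shift_pow_apply, Pi.single_apply, add_right_inj, Nat.cast_inj, mul_ite,
    mul_one, mul_zero, Finset.sum_ite_eq', Finset.mem_range]
  split_ifs with h
  · rfl
  · rw [Nat.choose_eq_zero_of_lt (by omega), Nat.cast_zero]

lemma one_add_shift_pow_dilate (p m : ℕ) (f : ℤ → R) (j : ℤ) :
    ((1 + shift R ^ p) ^ m) f (p * j) = ((1 + shift R) ^ m) (fun i => f (p * i)) j := by
  induction m generalizing f with
  | zero => rfl
  | succ m ih =>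
    rw [pow_succ, pow_succ, Module.End.mul_apply, Module.End.mul_apply, ih]
    refine congrFun (congrArg _ (funext fun i => ?_)) j
    simp only [LinearMap.add_apply, Module.End.one_apply, Pi.add_apply, shift_pow_apply,
      shift_apply, mul_add, mul_one]

lemma one_add_shift_pow_sub_apply {p : ℕ} (hp : p ≠ 0) (f : ℤ → R) (j : ℤ) :
    ((1 + shift R) ^ p - (1 + shift R ^ p)) f j =
      ∑ k ∈ Finset.Ioo 0 p, (p.choose k : R) * f (j + k) := by
  have ends : ∑ k ∈ Finset.range (p + 1), (p.choose k : R) * f (j + k) =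
      f j + ∑ k ∈ Finset.Ioo 0 p, (p.choose k : R) * f (j + k) + f (j + p) := by
    rw [Finset.sum_range_succ, Finset.range_eq_Ico,
      ← Finset.Ioo_insert_left (Nat.pos_of_ne_zero hp), Finset.sum_insert Finset.left_notMem_Ioo]
    simp
  simp only [LinearMap.sub_apply, LinearMap.add_apply, Module.End.one_apply, Pi.sub_apply,
    Pi.add_apply, shift_pow_apply, one_add_shift_pow_apply, ends]
  ring

lemma one_add_shift_pow_apply_of_sum_eq_zero (hv : ∑ i, v i = 0) (m : ℕ) (j : ℤ) :
    ((1 + shift R) ^ m) (fun i => v i) j = (-1) ^ m * v (j + 2 * m) := by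
  induction m generalizing j with
  | zero => simp
  | succ m ih =>
    rw [pow_succ', Module.End.mul_apply, LinearMap.add_apply, Module.End.one_apply, Pi.add_apply,
      shift_apply, ih, ih]
    have h := sum_arithmetic_progression_eq_zero hv one_ne_zero ((j : ZMod 3) + 2 * m)
    push_cast
    rw [mul_one] at h
    rw [add_right_comm, pow_succ, show (j : ZMod 3) + 2 * (m + 1) = j + 2 * m + 2 by ring]
    linear_combination (-1) ^ m * h

lemma one_add_shift_pow_sub_apply_of_sum_eq_zero (hv : ∑ i, v i = 0) {p : ℕ} (hodd : Odd p)
    (hp3 : (p : ZMod 3) ≠ 0) (j : ℤ) :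
    ((1 + shift R) ^ p - (1 + shift R ^ p)) (fun i => v i) j = 0 := by
  have h := sum_arithmetic_progression_eq_zero hv hp3 j
  simp only [LinearMap.sub_apply, LinearMap.add_apply, Module.End.one_apply, Pi.sub_apply,
    Pi.add_apply, shift_pow_apply, one_add_shift_pow_apply_of_sum_eq_zero hv, hodd.neg_one_pow]
  push_cast
  linear_combination -h

/-- The sequence on `ℤ` that is the `3`-periodic sequence `v` at positive indices and zero at all
others: the weights of `halfRowSum`. -/
def positivePeriodic (v : ZMod 3 → R) (j : ℤ) : R := if 0 < j then v j else 0

/-- The sum `∑_{0 < k ≤ N} C(2N, N+k) v_k` over the right half of row `2N` of Pascal's triangle,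
with `3`-periodic weights. It is written with the shift operator `E`, as the value at `-N` of
`(1 + E) ^ (2N)` applied to the weights. -/
def halfRowSum (v : ZMod 3 → R) (N : ℕ) : R :=
  ((1 + shift R) ^ (2 * N)) (positivePeriodic v) (-N)

lemma positivePeriodic_of_pos {j : ℤ} (hj : 0 < j) : positivePeriodic v j = v j := if_pos hj

lemma positivePeriodic_of_nonpos {j : ℤ} (hj : j ≤ 0) : positivePeriodic v j = 0 :=
  if_neg hj.not_gt

lemma positivePeriodic_natCast_mul {p : ℕ} (hp : 0 < p) (j : ℤ) :
    positivePeriodic v (p * j) = positivePeriodic (fun x => v (p * x)) j := by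
  simp [positivePeriodic, hp]

lemma positivePeriodic_second_difference (hv : ∑ i, v i = 0) (j : ℤ) :
    positivePeriodic v j + 2 * positivePeriodic v (j + 1) + positivePeriodic v (j + 2) =
      positivePeriodic v (j + 1) + v 1 * Pi.single (M := fun _ => R) 0 1 (j + 1) -
        v 0 * Pi.single (M := fun _ => R) 1 1 (j + 1) := by
  have hzero : v j + v (j + 1) + v (j + 2) = 0 := by
    simpa using sum_arithmetic_progression_eq_zero hv one_ne_zero (j : ZMod 3)
  simp only [Pi.single_apply]
  obtain hj | rfl | rfl | hj : j < -1 ∨ j = -1 ∨ j = 0 ∨ 0 < j := by omega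
  · rw [positivePeriodic_of_nonpos (by omega), positivePeriodic_of_nonpos (by omega),
      positivePeriodic_of_nonpos (by omega), if_neg (by omega), if_neg (by omega)]
    ring
  · simp [positivePeriodic]
  · simp only [positivePeriodic, lt_irrefl, if_false, zero_add, zero_lt_one, zero_lt_two, if_true,
      one_ne_zero, Int.cast_one, Int.cast_ofNat, Int.cast_zero] at hzero ⊢
    linear_combination hzero
  · rw [positivePeriodic_of_pos hj, positivePeriodic_of_pos (by omega),
      positivePeriodic_of_pos (by omega), if_neg (by omega), if_neg (by omega)]
    push_cast
    linear_combination hzero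

lemma one_add_shift_sq_positivePeriodic (hv : ∑ i, v i = 0) :
    ((1 + shift R) ^ 2 : Module.End R (ℤ → R)) (positivePeriodic v) =
      shift R (positivePeriodic v + v 1 • Pi.single 0 1 - v 0 • Pi.single 1 1) := by
  ext j
  simp only [shift_apply, Pi.sub_apply, Pi.add_apply, Pi.smul_apply, smul_eq_mul,
    ← positivePeriodic_second_difference hv, one_add_shift_pow_apply, Finset.sum_range_succ,
    Finset.sum_range_zero]
  simp

lemma halfRowSum_succ (hv : ∑ i, v i = 0) (N : ℕ) :
    halfRowSum v (N + 1) =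
      halfRowSum v N + (v 1 * (2 * N).choose N - v 0 * (2 * N).choose (N + 1)) := by
  have commute : Commute ((1 + shift R) ^ (2 * N)) (shift R) :=
    ((Commute.one_left _).add_left (Commute.refl _)).pow_left _
  have center := one_add_shift_pow_single (R := R) (2 * N) N (-N)
  have right := one_add_shift_pow_single (R := R) (2 * N) (N + 1) (-N)
  rw [neg_add_cancel] at center
  rw [Nat.cast_succ, neg_add_cancel_left] at right
  rw [halfRowSum, mul_add_one, pow_add, Module.End.mul_apply, one_add_shift_sq_positivePeriodic hv,
    ← Module.End.mul_apply, commute.eq, Module.End.mul_apply, shift_apply,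
    show -((N + 1 : ℕ) : ℤ) + 1 = -N by push_cast; ring]
  simp only [map_sub, map_add, map_smul, Pi.sub_apply, Pi.add_apply, Pi.smul_apply, smul_eq_mul,
    center, right, halfRowSum]
  ring

lemma halfRowSum_eq_sum (hv : ∑ i, v i = 0) (N : ℕ) :
    halfRowSum v N =
      ∑ k ∈ Finset.range N, (v 1 * (2 * k).choose k - v 0 * (2 * k).choose (k + 1)) := by
  induction N with
  | zero => simp [halfRowSum, positivePeriodic]
  | succ N ih => rw [halfRowSum_succ hv, ih, Finset.sum_range_succ]

lemma one_add_shift_pow_sub_positivePeriodic (hv : ∑ i, v i = 0) {p : ℕ} (hodd : Odd p)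
    (hp3 : (p : ZMod 3) ≠ 0) (j : ℤ) :
    ((1 + shift R) ^ p - (1 + shift R ^ p)) (positivePeriodic v) (p * j) = 0 := by
  rw [one_add_shift_pow_sub_apply hodd.pos.ne']
  rcases lt_or_ge j 0 with hj | hj
  · refine Finset.sum_eq_zero fun k hk => ?_
    have hkp := (Finset.mem_Ioo.mp hk).2
    rw [positivePeriodic_of_nonpos (by nlinarith), mul_zero]
  · rw [← one_add_shift_pow_sub_apply_of_sum_eq_zero hv hodd hp3 (p * j),
      one_add_shift_pow_sub_apply hodd.pos.ne']
    refine Finset.sum_congr rfl fun k hk => ?_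
    have hk0 := (Finset.mem_Ioo.mp hk).1
    rw [positivePeriodic_of_pos (by positivity)]

theorem sq_dvd_halfRowSum_mul_sub (hv : ∑ i, v i = 0) {p : ℕ} (hp : p.Prime) (hodd : Odd p)
    (hp3 : (p : ZMod 3) ≠ 0) (n : ℕ) :
    (p : R) ^ 2 ∣ halfRowSum v (n * p) - halfRowSum (fun x => v (p * x)) n := by
  obtain ⟨Q, hQ⟩ := exists_add_pow_prime_mul_eq hp (1 : Polynomial R) Polynomial.X (2 * n)
  have expansion := congrArg (Polynomial.aeval (shift R)) hQ
  simp only [map_add, map_sub, map_mul, map_pow, map_one, map_natCast, one_pow,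
    Polynomial.aeval_X] at expansion
  have leading : ((1 + shift R ^ p) ^ (2 * n)) (positivePeriodic v) (p * -n) =
      halfRowSum (fun x => v (p * x)) n := by
    simp only [one_add_shift_pow_dilate, positivePeriodic_natCast_mul hp.pos, halfRowSum]
  have linear : ((1 + shift R ^ p) ^ (2 * n - 1) * ((1 + shift R) ^ p - (1 + shift R ^ p)))
      (positivePeriodic v) (p * -n) = 0 := by
    rw [Module.End.mul_apply, one_add_shift_pow_dilate]
    simp only [one_add_shift_pow_sub_positivePeriodic hv hodd hp3]
    exact congrFun (map_zero _) _
  refine ⟨Polynomial.aeval (shift R) Q (positivePeriodic v) (p * -n), ?_⟩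
  rw [halfRowSum, show 2 * (n * p) = p * (2 * n) by ring,
    show -((n * p : ℕ) : ℤ) = p * -n by push_cast; ring, expansion, mul_assoc (Nat.cast (2 * n)),
    ← nsmul_eq_mul, ← Nat.cast_pow, ← nsmul_eq_mul]
  simp only [LinearMap.add_apply, Pi.add_apply, LinearMap.smul_apply, Pi.smul_apply, leading,
    linear]
  simp

end HalfRowSum

lemma cast_choose_two_mul_succ (k : ℕ) :
    ((2 * k).choose (k + 1) : ℚ) = (2 * k).choose k * k / (k + 1) := by
  have h := Nat.choose_succ_right_eq (2 * k) k
  rw [two_mul, Nat.add_sub_cancel, ← two_mul] at h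
  rw [eq_div_iff (by positivity)]
  exact_mod_cast h

lemma beta_eq_halfRowSum {v : ZMod 3 → ℤ} (hv : ∑ i, v i = 0) (h0 : v 0 = 1) (h1 : v 1 = 1)
    (N : ℕ) : beta N = halfRowSum v N := by
  rw [halfRowSum_eq_sum hv, beta, h0, h1]
  push_cast
  refine Finset.sum_congr rfl fun k _ => ?_
  rw [cast_choose_two_mul_succ]
  field_simp
  ring

lemma neg_gamma_eq_halfRowSum {v : ZMod 3 → ℤ} (hv : ∑ i, v i = 0) (h0 : v 0 = 1)
    (h1 : v 1 = -2) (N : ℕ) : -gamma N = halfRowSum v N := by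
  rw [halfRowSum_eq_sum hv, gamma, h0, h1, ← Finset.sum_neg_distrib]
  push_cast
  refine Finset.sum_congr rfl fun k _ => ?_
  rw [cast_choose_two_mul_succ]
  field_simp
  ring

theorem beta_supercongruence_two_mod_three (p n : ℕ) (hp : p.Prime) (hp5 : 5 ≤ p)
    (hp3 : p % 3 = 2) (hn : 0 < n) :
    ratCongr p 2 (beta (n * p)) (-(gamma n)) := by
  let v : ZMod 3 → ℤ := ![1, 1, -2]
  have hp_two : (p : ZMod 3) = 2 := by
    rw [← ZMod.natCast_mod, hp3, Nat.cast_ofNat]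
  have hodd : Odd p := hp.odd_of_ne_two (by omega)
  have hv : ∑ i, v i = 0 := by decide
  have hv_dilate : ∑ i, v (p * i) = 0 := by rw [hp_two]; decide
  rw [beta_eq_halfRowSum hv rfl rfl,
    neg_gamma_eq_halfRowSum hv_dilate (by rw [mul_zero]; rfl) (by rw [hp_two]; rfl)]
  exact ratCongr_intCast hp.ne_one
    (sq_dvd_halfRowSum_mul_sub hv hp hodd (by rw [hp_two]; decide) n)
end

section
/- Let p ≥ 5 be a prime. Then ∑_{k=0}^{p-2} (C(2k,k)/(k+1))·(H_{2k} - H_k) ≡ 5/2 + (3/2)·(p/3) (mod p), as a congruence of rational numbers, where (p/3) denotes the Legendre symbol of p modulo 3. -/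
/-- The `n`-th harmonic number `H_n = ∑_{j=1}^n 1/j`, with `H_0 = 0`. -/
def H (n : ℕ) : ℚ := ∑ j ∈ Finset.range n, 1 / (j + 1 : ℚ)

/-!
The derivative of `C(X + 2k, k)` at `X = 0` is `C(2k, k) (H_{2k} - H_k)`, so the sum is `F'(0)`
for `F = ∑_{k < p - 1} C(X + 2k, k) / (k + 1)`. All these polynomials reduce modulo `p`. Let
`A = ∑_{k < p} C(X + 2k, k)` over `𝔽_p`. Pascal's rule gives
`A(X + 1) - A(X) + A(X - 1) = 1 - X^{p-1}` and absorption gives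
`(X - 1) F(X) = A(X - 2) - A(X) - (X - 1)^{p-1}`, so `F'(0)` is determined by the values of `A`
and `A'` at `0` and `-2`. On `𝔽_p` the recurrence forces `A` to be even and `A'` to be odd.
Comparing `A` and `A'` with the solution `0, 1, 1, 0, -1, -1, …` of the homogeneous recurrence
over one period gives `A(0) = (p/3)` and `A'(-1) = 0`.
-/

namespace CatalanHarmonic

open Finset Polynomial

section HexSeq

/-- The sequence `0, 1, 1, 0, -1, -1, …` of period six, the fundamental solution of
`f (n + 2) - f (n + 1) + f n = 0`. -/
def hexSeq : ℕ → ℤ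
  | 0 => 0
  | 1 => 1
  | n + 2 => hexSeq (n + 1) - hexSeq n

lemma hexSeq_add_two (n : ℕ) : hexSeq (n + 2) = hexSeq (n + 1) - hexSeq n := rfl

lemma hexSeq_antiperiodic : Function.Antiperiodic hexSeq 3 := fun n => by
  rw [hexSeq_add_two (n + 1), hexSeq_add_two n]
  ring

lemma hexSeq_mod_six (n : ℕ) : hexSeq (n % 6) = hexSeq n :=
  hexSeq_antiperiodic.periodic_two_mul.map_mod_nat n

lemma fwdDiff_iter_hexSeq (n r : ℕ) : (fwdDiff 1)^[n] hexSeq r = hexSeq (r + 2 * n) := by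
  induction n generalizing r with
  | zero => rfl
  | succ n ih =>
    rw [Function.iterate_succ_apply', fwdDiff, ih, ih, show r + 1 + 2 * n = r + 2 * n + 1 by ring,
      ← hexSeq_add_two]
    rfl

lemma mod_six_eq_one_or_five {n : ℕ} (hn : n.Coprime 6) : n % 6 = 1 ∨ n % 6 = 5 := by
  have hres : ∀ r < 6, r.gcd 6 = 1 → r = 1 ∨ r = 5 := by decide
  exact hres _ (Nat.mod_lt n (by norm_num)) (by rwa [← Nat.gcd_rec, Nat.gcd_comm])

lemma hexSeq_of_coprime_six {n : ℕ} (hn : n.Coprime 6) : hexSeq n = leg3 n := by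
  rw [← hexSeq_mod_six, leg3]
  rcases mod_six_eq_one_or_five hn with h | h
  · rw [h, if_pos (by omega)]; rfl
  · rw [h, if_neg (by omega)]; rfl

lemma two_mul_hexSeq_pred_of_coprime_six {n : ℕ} (hn : n.Coprime 6) :
    2 * hexSeq (n - 1) = leg3 n - 1 := by
  rw [← hexSeq_mod_six, leg3]
  rcases mod_six_eq_one_or_five hn with h | h
  · rw [show (n - 1) % 6 = 0 by omega, if_pos (by omega)]; rfl
  · rw [show (n - 1) % 6 = 4 by omega, if_neg (by omega)]; rfl

lemma hexSeq_two_mul_of_coprime_six {n : ℕ} (hn : n.Coprime 6) : hexSeq (2 * n) = hexSeq n := by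
  rw [← hexSeq_mod_six (2 * n), ← hexSeq_mod_six n]
  rcases mod_six_eq_one_or_five hn with h | h
  · rw [h, show 2 * n % 6 = 2 by omega]; rfl
  · rw [h, show 2 * n % 6 = 4 by omega]; rfl

end HexSeq

lemma fwdDiff_iter_succ_zero {G : Type*} [AddCommGroup G] (v : ℕ → G) (n : ℕ) :
    (fwdDiff 1)^[n + 1] v 0 = v (n + 1) + (-1 : ℤ) ^ (n + 1) • v 0 +
      ∑ k ∈ range n, ((-1 : ℤ) ^ (n - k) * (n + 1).choose (k + 1)) • v (k + 1) := by
  rw [fwdDiff_iter_eq_sum_shift, sum_range_succ, sum_range_succ']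
  simp only [zero_add, smul_eq_mul, mul_one, Nat.add_sub_add_right, Nat.choose_zero_right,
    Nat.choose_self, Nat.cast_one, tsub_self, tsub_zero, pow_zero, one_smul]
  abel

section Prime

variable {p : ℕ} [Fact p.Prime]

lemma natCast_factorial_ne_zero {n : ℕ} (hn : n < p) : (n.factorial : ZMod p) ≠ 0 := by
  rw [Ne, ZMod.natCast_eq_zero_iff, (Fact.out : p.Prime).dvd_factorial]
  exact not_le.2 hn

lemma natCast_succ_ne_zero {k : ℕ} (hk : k + 1 < p) : (k : ZMod p) + 1 ≠ 0 := by
  rw [← Nat.cast_succ, Ne, ZMod.natCast_eq_zero_iff]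
  exact Nat.not_dvd_of_pos_of_lt k.succ_pos hk

lemma neg_one_pow_pred : (-1 : ZMod p) ^ (p - 1) = 1 :=
  ZMod.pow_card_sub_one_eq_one (neg_ne_zero.2 one_ne_zero)

lemma neg_one_pow_sub_two : (-1 : ZMod p) ^ (p - 2) = -1 := by
  have h := pow_succ (-1 : ZMod p) (p - 2)
  rw [show p - 2 + 1 = p - 1 by have := (Fact.out : p.Prime).two_le; omega, neg_one_pow_pred] at h
  linear_combination h

lemma natCast_pred : ((p - 1 : ℕ) : ZMod p) = -1 := by
  rw [Nat.cast_pred (Fact.out : p.Prime).pos, ZMod.natCast_self, zero_sub]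

lemma two_ne_zero_of_ne_two (hp : p ≠ 2) : (2 : ZMod p) ≠ 0 :=
  Ring.two_ne_zero (by rwa [ZMod.ringChar_zmod_n])

lemma coprime_six_of_prime (hp5 : 5 ≤ p) : p.Coprime 6 := by
  have hp : p.Prime := Fact.out
  have h2 : p.Coprime 2 := (Nat.coprime_primes hp Nat.prime_two).2 (by omega)
  have h3 : p.Coprime 3 := (Nat.coprime_primes hp Nat.prime_three).2 (by omega)
  exact h2.mul_right h3

lemma natCast_choose_pred {k : ℕ} (hk : k < p) : ((p - 1).choose k : ZMod p) = (-1) ^ k := by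
  have hdesc := descPochhammer_eval_eq_descFactorial (ZMod p) (p - 1) k
  rw [natCast_pred, Nat.descFactorial_eq_factorial_mul_choose, Nat.cast_mul] at hdesc
  have hasc := ascPochhammer_eval_neg_eq_descPochhammer (ZMod p) (-1) k
  rw [neg_neg, ascPochhammer_eval_one, hdesc, mul_left_comm] at hasc
  have hinv := mul_left_cancel₀ (natCast_factorial_ne_zero hk) ((mul_one _).trans hasc)
  have hsq : (-1 : ZMod p) ^ k * (-1) ^ k = 1 := by rw [← mul_pow, neg_one_mul, neg_neg, one_pow]
  linear_combination ((p - 1).choose k : ZMod p) * -hsq - (-1) ^ k * hinv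

lemma natCast_choose_div {k : ℕ} (hk : k + 1 < p) :
    ((p.choose (k + 1) / p : ℕ) : ZMod p) = (-1) ^ k / (k + 1) := by
  have hp : p.Prime := Fact.out
  have hdvd : p ∣ p.choose (k + 1) := hp.dvd_choose_self k.succ_ne_zero hk
  have h : p.choose (k + 1) / p * (k + 1) = (p - 1).choose k := by
    apply Nat.eq_of_mul_eq_mul_left hp.pos
    rw [← mul_assoc, Nat.mul_div_cancel' hdvd]
    have := Nat.add_one_mul_choose_eq (p - 1) k
    rwa [Nat.sub_add_cancel hp.one_le, eq_comm] at this
  rw [eq_div_iff (natCast_succ_ne_zero hk), ← natCast_choose_pred (by omega), ← h]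
  push_cast
  rfl

lemma exists_fwdDiff_iter_prime_eq (hp2 : p ≠ 2) (v : ℕ → ℤ) :
    ∃ s : ℤ, (fwdDiff 1)^[p] v 0 = v p - v 0 + p * s ∧
      (s : ZMod p) = ∑ k ∈ range (p - 1), (v (k + 1) : ZMod p) / (k + 1) := by
  have hp : p.Prime := Fact.out
  have hlt : ∀ k ∈ range (p - 1), k + 1 < p := fun k hk => by rw [mem_range] at hk; omega
  refine ⟨∑ k ∈ range (p - 1), (-1) ^ (p - 1 - k) * ((p.choose (k + 1) / p : ℕ) : ℤ) * v (k + 1),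
    ?_, ?_⟩
  · have h := fwdDiff_iter_succ_zero v (p - 1)
    rw [Nat.sub_add_cancel hp.one_le, (hp.odd_of_ne_two hp2).neg_one_pow, neg_one_zsmul,
      ← sub_eq_add_neg] at h
    rw [h, mul_sum]
    refine congrArg _ (sum_congr rfl fun k hk => ?_)
    conv_lhs => rw [← Nat.mul_div_cancel' (hp.dvd_choose_self k.succ_ne_zero (hlt k hk))]
    push_cast
    ring
  · rw [Int.cast_sum]
    refine sum_congr rfl fun k hk => ?_
    have hsign : (-1 : ZMod p) ^ (p - 1 - k) * (-1) ^ k = 1 := by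
      rw [← pow_add, Nat.sub_add_cancel (Nat.le_of_lt (mem_range.1 hk)), neg_one_pow_pred]
    rw [Int.cast_mul, Int.cast_mul, Int.cast_natCast, natCast_choose_div (hlt k hk)]
    push_cast
    linear_combination (v (k + 1) : ZMod p) / (k + 1) * hsign

/-- A step-`1` difference of `hexSeq` is a shift by two, so its `p`-th iterate shifts by `2 * p` and
the term of order `p` in `exists_fwdDiff_iter_prime_eq` must vanish. -/
lemma sum_hexSeq_div_eq_zero (hp5 : 5 ≤ p) :
    ∑ k ∈ range (p - 1), (hexSeq (k + 1) : ZMod p) / (k + 1) = 0 := by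
  obtain ⟨s, hs, hsum⟩ := exists_fwdDiff_iter_prime_eq (by omega : p ≠ 2) hexSeq
  rw [fwdDiff_iter_hexSeq, zero_add, hexSeq_two_mul_of_coprime_six (coprime_six_of_prime hp5),
    show hexSeq 0 = 0 from rfl, sub_zero, left_eq_add] at hs
  have hs0 : s = 0 := (mul_eq_zero.1 hs).resolve_left (by exact_mod_cast NeZero.ne p)
  rw [← hsum, hs0, Int.cast_zero]

end Prime

section ThreeTerm

variable {n : ℕ} {R : Type*} [CommRing R]

/-- The function `f` solves the three-term recurrence with right-hand side `g`; the associated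
homogeneous recurrence is the one defining `hexSeq`. -/
def ThreeTerm (f g : ZMod n → R) : Prop := ∀ a, f (a + 1) - f a + f (a - 1) = g a

/-- Variation of constants: `f` is recovered from its initial value and `g` through its Casoratian
with `hexSeq`. -/
lemma ThreeTerm.casoratian_hexSeq {f g : ZMod n → R} (hf : ThreeTerm f g) (m : ℕ) :
    hexSeq m * f (m + 1) - hexSeq (m + 1) * f m =
      -f 0 + ∑ k ∈ range m, hexSeq (k + 1) * g (k + 1) := by
  induction m with
  | zero => simp [hexSeq]
  | succ m ih =>
    have h := hf (m + 1)
    rw [add_sub_cancel_right] at h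
    rw [sum_range_succ, ← add_assoc, ← ih, hexSeq_add_two, ← h]
    push_cast
    ring

variable [NoZeroDivisors R]

lemma ThreeTerm.eq_zero (hn : Odd n) (h2 : (2 : R) ≠ 0) {f : ZMod n → R} (hf : ThreeTerm f 0)
    (a : ZMod n) : f a = 0 := by
  have hanti : Function.Antiperiodic f 3 := fun a => by
    have h₁ := hf (a + 1)
    have h₂ := hf (a + 2)
    rw [show a + 1 + 1 = a + 2 by ring, show a + 1 - 1 = a by ring, Pi.zero_apply] at h₁
    rw [show a + 2 + 1 = a + 3 by ring, show a + 2 - 1 = a + 1 by ring, Pi.zero_apply] at h₂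
    linear_combination h₁ + h₂
  obtain ⟨m, rfl⟩ := hn
  have hneg : f a = -f a := by
    have h := hanti.odd_nsmul_antiperiodic m a
    rwa [nsmul_eq_mul, ZMod.natCast_self, zero_mul, add_zero] at h
  exact (mul_eq_zero.1 (by linear_combination hneg : 2 * f a = 0)).resolve_left h2

lemma ThreeTerm.map_neg (hn : Odd n) (h2 : (2 : R) ≠ 0) {f g : ZMod n → R} {ε : R}
    (hf : ThreeTerm f g) (hg : ∀ a, g (-a) = ε * g a) (a : ZMod n) :
    f (-a) = ε * f a := by
  refine sub_eq_zero.1 (ThreeTerm.eq_zero (f := fun a => f (-a) - ε * f a) hn h2 (fun a => ?_) a)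
  have h := hf (-a)
  rw [hg, ← hf a, show -a + 1 = -(a - 1) by ring, show -a - 1 = -(a + 1) by ring] at h
  rw [Pi.zero_apply]
  linear_combination h

end ThreeTerm

section BinomialPolynomials

lemma natCast_succ_ne_zero_of_factorial {R : Type*} [Semiring R] {n k : ℕ}
    (hn : (n.factorial : R) ≠ 0) (hk : k < n) : (k : R) + 1 ≠ 0 := fun h => hn <| by
  obtain ⟨m, hm⟩ := Nat.dvd_factorial k.succ_pos hk
  rw [hm, Nat.cast_mul, Nat.cast_succ, h, zero_mul]

variable (K : Type*) [Field K]

/-- The binomial coefficient `C(X, k)` as a polynomial; it is the zero polynomial when `k ! = 0`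
in `K`. -/
noncomputable def binomPoly (k : ℕ) : K[X] := C (k.factorial : K)⁻¹ * descPochhammer K k

/-- The binomial coefficient `C(X + 2k, k)`, whose derivative at `0` produces the harmonic factor
`H (2 * k) - H k`. -/
noncomputable def centralBinomPoly (k : ℕ) : K[X] :=
  (binomPoly K k).comp (X + ((2 * k : ℕ) : K[X]))

/-- The partial sum `∑_{k < n} C(X + 2k, k)`. -/
noncomputable def centralBinomSum (n : ℕ) : K[X] := ∑ k ∈ range n, centralBinomPoly K k

/-- The partial sum `∑_{k < n} C(X + 2k, k) / (k + 1)`. -/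
noncomputable def catalanSum (n : ℕ) : K[X] :=
  ∑ k ∈ range n, C ((k : K) + 1)⁻¹ * centralBinomPoly K k

lemma binomPoly_succ (k : ℕ) :
    binomPoly K (k + 1) = C ((k : K) + 1)⁻¹ * binomPoly K k * (X - (k : K[X])) := by
  rw [binomPoly, binomPoly, descPochhammer_succ_right, Nat.factorial_succ, Nat.cast_mul, mul_inv,
    C_mul, Nat.cast_succ]
  ring

lemma natDegree_binomPoly_le (k : ℕ) : (binomPoly K k).natDegree ≤ k :=
  (natDegree_C_mul_le _ _).trans (descPochhammer_natDegree K k).le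

lemma centralBinomPoly_zero : centralBinomPoly K 0 = 1 := by
  simp [centralBinomPoly, binomPoly]

lemma centralBinomSum_succ (n : ℕ) :
    centralBinomSum K (n + 1) = centralBinomSum K n + centralBinomPoly K n :=
  sum_range_succ _ n

lemma centralBinomSum_succ' (n : ℕ) :
    centralBinomSum K (n + 1) = ∑ k ∈ range n, centralBinomPoly K (k + 1) + 1 := by
  rw [centralBinomSum, sum_range_succ', centralBinomPoly_zero]

variable {K}

lemma eval_natCast_binomPoly {k : ℕ} (hk : (k.factorial : K) ≠ 0) (m : ℕ) :
    (binomPoly K k).eval (m : K) = m.choose k := by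
  rw [binomPoly, eval_C_mul, descPochhammer_eval_eq_descFactorial,
    Nat.descFactorial_eq_factorial_mul_choose, Nat.cast_mul, inv_mul_cancel_left₀ hk]

lemma C_inv_mul_natCast_add_one {k : ℕ} (hk : (k : K) + 1 ≠ 0) :
    C ((k : K) + 1)⁻¹ * ((k : K[X]) + 1) = 1 := by
  rw [← C_eq_natCast, ← C_1, ← C_add, ← C_mul, inv_mul_cancel₀ hk]

lemma binomPoly_succ_comp_X_add_one {k : ℕ} (hk : (k : K) + 1 ≠ 0) :
    (binomPoly K (k + 1)).comp (X + 1) = binomPoly K (k + 1) + binomPoly K k := by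
  have h := congrArg (fun f => f.comp (X + 1)) (descPochhammer_succ_comp_X_sub_one K k)
  simp only [comp_assoc, sub_comp, smul_eq_mul, mul_comp, add_comp, natCast_comp, X_comp, one_comp,
    add_sub_cancel_right, comp_X] at h
  simp only [binomPoly, Nat.factorial_succ, Nat.cast_mul, mul_inv, C_mul, Nat.cast_succ, mul_comp,
    C_comp]
  linear_combination -C ((k : K) + 1)⁻¹ * C (k.factorial : K)⁻¹ * h +
    C (k.factorial : K)⁻¹ * descPochhammer K k * C_inv_mul_natCast_add_one hk

lemma centralBinomPoly_succ {k : ℕ} (hk : (k : K) + 1 ≠ 0) :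
    centralBinomPoly K (k + 1) =
      (centralBinomPoly K (k + 1)).comp (X - 1) + (centralBinomPoly K k).comp (X + 1) := by
  have h := congrArg (fun f => f.comp (X + ((2 * k + 1 : ℕ) : K[X])))
    (binomPoly_succ_comp_X_add_one hk)
  have h₁ : X + ((2 * k + 1 : ℕ) : K[X]) + 1 = X + ((2 * (k + 1) : ℕ) : K[X]) := by
    push_cast; ring
  have h₂ : X - 1 + ((2 * (k + 1) : ℕ) : K[X]) = X + ((2 * k + 1 : ℕ) : K[X]) := by
    push_cast; ring
  have h₃ : X + 1 + ((2 * k : ℕ) : K[X]) = X + ((2 * k + 1 : ℕ) : K[X]) := by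
    push_cast; ring
  simp only [add_comp, comp_assoc, X_comp, one_comp, h₁] at h
  simpa only [centralBinomPoly, comp_assoc, add_comp, X_comp, natCast_comp, h₂, h₃] using h

lemma X_sub_one_mul_centralBinomPoly {k : ℕ} (hk : (k : K) + 1 ≠ 0) :
    (X - 1) * (C ((k : K) + 1)⁻¹ * centralBinomPoly K k) =
      (centralBinomPoly K (k + 1)).comp (X - 2) - centralBinomPoly K k := by
  have h : (centralBinomPoly K (k + 1)).comp (X - 2) =
      C ((k : K) + 1)⁻¹ * centralBinomPoly K k * (X + (k : K[X])) := by
    rw [centralBinomPoly, comp_assoc, binomPoly_succ, centralBinomPoly]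
    have harg : X - 2 + ((2 * (k + 1) : ℕ) : K[X]) = X + ((2 * k : ℕ) : K[X]) := by
      push_cast; ring
    simp only [mul_comp, C_comp, sub_comp, X_comp, add_comp, natCast_comp, harg]
    push_cast
    ring
  rw [h]
  linear_combination -centralBinomPoly K k * C_inv_mul_natCast_add_one hk

lemma centralBinomSum_comp_recurrence {n : ℕ} (hn : (n.factorial : K) ≠ 0) :
    (centralBinomSum K (n + 1)).comp (X + 1) - centralBinomSum K (n + 1) +
      (centralBinomSum K (n + 1)).comp (X - 1) = (centralBinomPoly K n).comp (X + 1) := by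
  have h : ∑ k ∈ range n, centralBinomPoly K (k + 1) =
      ∑ k ∈ range n, (centralBinomPoly K (k + 1)).comp (X - 1) +
        (centralBinomSum K n).comp (X + 1) := by
    rw [centralBinomSum, Polynomial.sum_comp, ← sum_add_distrib]
    exact sum_congr rfl fun k hk =>
      centralBinomPoly_succ (natCast_succ_ne_zero_of_factorial hn (mem_range.1 hk))
  nth_rw 1 [centralBinomSum_succ]
  rw [centralBinomSum_succ', add_comp, add_comp, one_comp, Polynomial.sum_comp]
  linear_combination -h

lemma X_sub_one_mul_catalanSum {n : ℕ} (hn : (n.factorial : K) ≠ 0) :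
    (X - 1) * catalanSum K n = (centralBinomSum K (n + 1)).comp (X - 2) -
      centralBinomSum K (n + 1) + centralBinomPoly K n - 1 := by
  have h : (X - 1) * catalanSum K n =
      ∑ k ∈ range n, (centralBinomPoly K (k + 1)).comp (X - 2) - centralBinomSum K n := by
    rw [catalanSum, centralBinomSum, mul_sum, ← sum_sub_distrib]
    exact sum_congr rfl fun k hk =>
      X_sub_one_mul_centralBinomPoly (natCast_succ_ne_zero_of_factorial hn (mem_range.1 hk))
  nth_rw 2 [centralBinomSum_succ]
  rw [h, centralBinomSum_succ', add_comp, one_comp, Polynomial.sum_comp]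
  ring

lemma eval_derivative_descPochhammer {y : K} {k : ℕ} (hy : ∀ j < k, y ≠ j) :
    (derivative (descPochhammer K k)).eval y =
      (descPochhammer K k).eval y * ∑ j ∈ range k, 1 / (y - j) := by
  induction k with
  | zero => simp
  | succ k ih =>
    have hk : y - k ≠ 0 := sub_ne_zero.2 (hy k k.lt_succ_self)
    rw [descPochhammer_succ_right, derivative_mul, sum_range_succ]
    simp only [eval_add, eval_mul, ih fun j hj => hy j (hj.trans k.lt_succ_self), derivative_sub,
      derivative_X, derivative_natCast, eval_sub, eval_X, eval_natCast, sub_zero, eval_one]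
    field_simp

variable (K) in
lemma eval_zero_derivative_centralBinomPoly (k : ℕ) :
    (derivative (centralBinomPoly K k)).eval 0 =
      (derivative (descPochhammer K k)).eval ((2 * k : ℕ) : K) / k.factorial := by
  rw [centralBinomPoly, binomPoly, derivative_comp, derivative_C_mul, derivative_add, derivative_X,
    derivative_natCast, add_zero, one_mul, eval_comp, eval_C_mul, eval_add, eval_X, eval_natCast,
    zero_add, div_eq_inv_mul]

lemma eval_natCast_derivative_descPochhammer (R : Type*) [Ring R] (k m : ℕ) :
    (derivative (descPochhammer R k)).eval (m : R) =
      ((derivative (descPochhammer ℤ k)).eval (m : ℤ) : ℤ) := by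
  rw [← descPochhammer_map (Int.castRingHom R), derivative_map, eval_natCast_map, eq_intCast]

variable (K) in
lemma eval_zero_derivative_catalanSum (n : ℕ) :
    (derivative (catalanSum K n)).eval 0 =
      ∑ k ∈ range n, (derivative (centralBinomPoly K k)).eval 0 / ((k : K) + 1) := by
  rw [catalanSum, derivative_sum, eval_finsetSum]
  refine sum_congr rfl fun k _ => ?_
  rw [derivative_C_mul, eval_C_mul, div_eq_inv_mul]

end BinomialPolynomials

section Rational

lemma harmonic_two_mul_sub (k : ℕ) :
    H (2 * k) - H k = ∑ j ∈ range k, 1 / (((2 * k : ℕ) : ℚ) - j) := by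
  rw [H, H, two_mul, sum_range_add, add_sub_cancel_left, ← sum_range_reflect]
  refine sum_congr rfl fun j hj => ?_
  have hj : j + 1 ≤ k := mem_range.1 hj
  rw [Nat.sub_sub, add_comm 1 j]
  push_cast [hj]
  ring

lemma eval_zero_derivative_centralBinomPoly_rat (k : ℕ) :
    (derivative (centralBinomPoly ℚ k)).eval 0 = (2 * k).choose k * (H (2 * k) - H k) := by
  have hfac : (k.factorial : ℚ) ≠ 0 := by exact_mod_cast k.factorial_ne_zero
  have hne : ∀ j < k, ((2 * k : ℕ) : ℚ) ≠ j := fun j hj => by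
    exact_mod_cast (by omega : 2 * k ≠ j)
  rw [eval_zero_derivative_centralBinomPoly, eval_derivative_descPochhammer hne,
    descPochhammer_eval_eq_descFactorial, Nat.descFactorial_eq_factorial_mul_choose, Nat.cast_mul,
    harmonic_two_mul_sub, mul_assoc, mul_div_cancel_left₀ _ hfac]

lemma eval_zero_derivative_catalanSum_rat (n : ℕ) :
    (derivative (catalanSum ℚ n)).eval 0 =
      ∑ k ∈ range n, ((2 * k).choose k : ℚ) / (k + 1) * (H (2 * k) - H k) := by
  rw [eval_zero_derivative_catalanSum]
  refine sum_congr rfl fun k _ => ?_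
  rw [eval_zero_derivative_centralBinomPoly_rat, mul_div_right_comm]

end Rational

section Reduction

variable {p : ℕ} [Fact p.Prime]

variable (p) in
/-- The graph of the reduction map from the `p`-integral rationals to `ZMod p`. -/
def reductionGraph : AddSubmonoid (ℚ × ZMod p) where
  carrier := {x | ∃ a b : ℤ, (b : ZMod p) ≠ 0 ∧ x = ((a : ℚ) / b, (a : ZMod p) / b)}
  zero_mem' := ⟨0, 1, by simp, by ext <;> simp⟩
  add_mem' := by
    rintro _ _ ⟨a, b, hb, rfl⟩ ⟨c, d, hd, rfl⟩
    have hb' : (b : ℚ) ≠ 0 := Int.cast_ne_zero.2 fun h => hb (by simp [h])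
    have hd' : (d : ℚ) ≠ 0 := Int.cast_ne_zero.2 fun h => hd (by simp [h])
    refine ⟨a * d + b * c, b * d, by simp [hb, hd], ?_⟩
    push_cast
    rw [Prod.mk_add_mk, div_add_div _ _ hb' hd', div_add_div _ _ hb hd]

lemma ratCongr_of_mem_reductionGraph {q r : ℚ} {z : ZMod p} (hq : (q, z) ∈ reductionGraph p)
    (hr : (r, z) ∈ reductionGraph p) : ratCongr p 1 q r := by
  obtain ⟨a, b, hb, hab⟩ := hq
  obtain ⟨c, d, hd, hcd⟩ := hr
  obtain ⟨rfl, hz⟩ := Prod.mk.inj hab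
  obtain ⟨rfl, hz'⟩ := Prod.mk.inj hcd
  have hb' : (b : ℚ) ≠ 0 := Int.cast_ne_zero.2 fun h => hb (by simp [h])
  have hd' : (d : ℚ) ≠ 0 := Int.cast_ne_zero.2 fun h => hd (by simp [h])
  have hcross : (a : ZMod p) * d = c * b := (div_eq_div_iff hb hd).1 (hz.symm.trans hz')
  obtain ⟨s, hs⟩ : (p : ℤ) ∣ a * d - c * b := by
    rw [← ZMod.intCast_zmod_eq_zero_iff_dvd]
    push_cast
    rw [hcross, sub_self]
  refine ⟨s, b * d, ?_, ?_⟩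
  · rw [← ZMod.intCast_zmod_eq_zero_iff_dvd, Int.cast_mul]
    exact mul_ne_zero hb hd
  · have hs' : (a * d - c * b : ℚ) = p * s := by exact_mod_cast hs
    push_cast
    rw [pow_one, ← hs']
    field_simp

lemma eval_zero_derivative_catalanSum_mem_reductionGraph {n : ℕ} (hn : n < p) :
    ((derivative (catalanSum ℚ n)).eval 0, (derivative (catalanSum (ZMod p) n)).eval 0) ∈
      reductionGraph p := by
  rw [eval_zero_derivative_catalanSum, eval_zero_derivative_catalanSum, prod_mk_sum]
  refine sum_mem fun k hk => ?_
  have hk : k < n := mem_range.1 hk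
  refine ⟨(derivative (descPochhammer ℤ k)).eval ((2 * k : ℕ) : ℤ), k.factorial * (k + 1), ?_, ?_⟩
  · push_cast
    exact mul_ne_zero (natCast_factorial_ne_zero (hk.trans hn)) (natCast_succ_ne_zero (by omega))
  · rw [eval_zero_derivative_centralBinomPoly, eval_zero_derivative_centralBinomPoly, div_div,
      div_div, eval_natCast_derivative_descPochhammer ℚ,
      eval_natCast_derivative_descPochhammer (ZMod p)]
    push_cast
    rfl

end Reduction

section FiniteField

variable {p : ℕ} [Fact p.Prime]

lemma natCast_factorial_pred_ne_zero : ((p - 1).factorial : ZMod p) ≠ 0 :=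
  natCast_factorial_ne_zero (Nat.sub_one_lt (Fact.out : p.Prime).ne_zero)

lemma binomPoly_pred : binomPoly (ZMod p) (p - 1) = 1 - (X + 1) ^ (p - 1) := by
  have hp : p.Prime := Fact.out
  refine eq_of_natDegree_lt_card_of_eval_eq _ _ Function.injective_id (fun a : ZMod p => ?_) ?_
  · obtain ⟨m, hm, rfl⟩ : ∃ m < p, (m : ZMod p) = a := ⟨a.val, a.val_lt, a.natCast_zmod_val⟩
    rw [id, eval_natCast_binomPoly natCast_factorial_pred_ne_zero, eval_sub, eval_pow, eval_add,
      eval_X, eval_one]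
    rcases (Nat.le_sub_one_of_lt hm).lt_or_eq with hlt | rfl
    · rw [Nat.choose_eq_zero_of_lt hlt, ZMod.pow_card_sub_one_eq_one
        (natCast_succ_ne_zero (by omega)), Nat.cast_zero, sub_self]
    · rw [Nat.choose_self, natCast_pred, neg_add_cancel, zero_pow (Nat.sub_ne_zero_of_lt hp.one_lt),
        Nat.cast_one, sub_zero]
  · rw [ZMod.card]
    refine (max_le (natDegree_binomPoly_le _ _) ?_).trans_lt (Nat.sub_one_lt hp.ne_zero)
    compute_degree

lemma centralBinomPoly_pred : centralBinomPoly (ZMod p) (p - 1) = 1 - (X - 1) ^ (p - 1) := by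
  have harg : X + ((2 * (p - 1) : ℕ) : (ZMod p)[X]) + 1 = X - 1 := by
    rw [Nat.cast_mul, ← C_eq_natCast (p - 1), natCast_pred, C_neg, C_1]
    push_cast
    ring
  rw [centralBinomPoly, binomPoly_pred, sub_comp, pow_comp, add_comp, one_comp, X_comp, harg]

lemma centralBinomSum_prime_recurrence :
    (centralBinomSum (ZMod p) p).comp (X + 1) - centralBinomSum (ZMod p) p +
      (centralBinomSum (ZMod p) p).comp (X - 1) = 1 - X ^ (p - 1) := by
  have h := centralBinomSum_comp_recurrence (natCast_factorial_pred_ne_zero (p := p))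
  rwa [Nat.sub_add_cancel (Fact.out : p.Prime).one_le, centralBinomPoly_pred, sub_comp, pow_comp,
    sub_comp, one_comp, X_comp, add_sub_cancel_right] at h

lemma threeTerm_centralBinomSum :
    ThreeTerm (fun a => (centralBinomSum (ZMod p) p).eval a)
      (fun a => 1 - a ^ (p - 1)) := fun a => by
  simpa only [eval_add, eval_sub, eval_comp, eval_X, eval_one, eval_pow] using
    congrArg (eval a) centralBinomSum_prime_recurrence

lemma threeTerm_derivative_centralBinomSum :
    ThreeTerm (fun a => (derivative (centralBinomSum (ZMod p) p)).eval a)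
      (fun a => a ^ (p - 2)) := fun a => by
  have h := congrArg (fun f => (derivative f).eval a) (centralBinomSum_prime_recurrence (p := p))
  simpa only [derivative_add, derivative_sub, derivative_comp, derivative_X, derivative_one,
    derivative_X_pow, eval_add, eval_sub, eval_mul, eval_comp, eval_X, eval_one, eval_pow, add_zero,
    sub_zero, one_mul, zero_sub, C_neg, C_1, natCast_pred, eval_neg, neg_mul, neg_neg,
    Nat.sub_sub] using h

lemma ThreeTerm.casoratian_hexSeq_pred {f g : ZMod p → ZMod p} (hf : ThreeTerm f g) :
    hexSeq (p - 1) * f 0 - hexSeq p * f (-1) =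
      -f 0 + ∑ k ∈ range (p - 1), hexSeq (k + 1) * g (k + 1) := by
  have h := hf.casoratian_hexSeq (p - 1)
  rwa [Nat.sub_add_cancel (Fact.out : p.Prime).one_le, natCast_pred, neg_add_cancel] at h

lemma intCast_leg3_ne_zero : (leg3 p : ZMod p) ≠ 0 := by
  rw [leg3]
  split_ifs <;> simp

lemma eval_neg_centralBinomSum (hp2 : p ≠ 2) (a : ZMod p) :
    (centralBinomSum (ZMod p) p).eval (-a) = (centralBinomSum (ZMod p) p).eval a := by
  have hodd : Odd p := (Fact.out : p.Prime).odd_of_ne_two hp2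
  have hg : ∀ a : ZMod p, 1 - (-a) ^ (p - 1) = 1 * (1 - a ^ (p - 1)) := fun a => by
    rw [((Fact.out : p.Prime).even_sub_one hp2).neg_pow, one_mul]
  have h := threeTerm_centralBinomSum.map_neg hodd (two_ne_zero_of_ne_two hp2) hg a
  rwa [one_mul] at h

lemma eval_neg_derivative_centralBinomSum (hp2 : p ≠ 2) (a : ZMod p) :
    (derivative (centralBinomSum (ZMod p) p)).eval (-a) =
      -(derivative (centralBinomSum (ZMod p) p)).eval a := by
  have hp : p.Prime := Fact.out
  have hodd : Odd p := hp.odd_of_ne_two hp2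
  have hg : ∀ a : ZMod p, (-a) ^ (p - 2) = -1 * a ^ (p - 2) := fun a => by
    rw [(Nat.Odd.sub_even hp.two_le hodd even_two).neg_pow, neg_one_mul]
  have h := threeTerm_derivative_centralBinomSum.map_neg hodd (two_ne_zero_of_ne_two hp2) hg a
  rwa [neg_one_mul] at h

lemma two_mul_eval_neg_one_centralBinomSum (hp2 : p ≠ 2) :
    2 * (centralBinomSum (ZMod p) p).eval (-1) = 1 + (centralBinomSum (ZMod p) p).eval 0 := by
  have hp : p.Prime := Fact.out
  have hrec := threeTerm_centralBinomSum (0 : ZMod p)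
  simp only [zero_add, zero_sub, zero_pow (Nat.sub_ne_zero_of_lt hp.one_lt), sub_zero] at hrec
  linear_combination hrec + eval_neg_centralBinomSum hp2 1

lemma eval_zero_centralBinomSum (hp5 : 5 ≤ p) :
    (centralBinomSum (ZMod p) p).eval 0 = leg3 p := by
  have hzero : ∀ k ∈ range (p - 1),
      (hexSeq (k + 1) : ZMod p) * (1 - ((k : ZMod p) + 1) ^ (p - 1)) = 0 := fun k hk => by
    rw [ZMod.pow_card_sub_one_eq_one
      (natCast_succ_ne_zero (by rw [mem_range] at hk; omega)), sub_self, mul_zero]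
  have hcas := (threeTerm_centralBinomSum (p := p)).casoratian_hexSeq_pred
  rw [sum_eq_zero hzero, hexSeq_of_coprime_six (coprime_six_of_prime hp5), add_zero] at hcas
  have hpred : (2 : ZMod p) * hexSeq (p - 1) = leg3 p - 1 := by
    exact_mod_cast congrArg (Int.cast : ℤ → ZMod p)
      (two_mul_hexSeq_pred_of_coprime_six (coprime_six_of_prime hp5))
  have hneg_one := two_mul_eval_neg_one_centralBinomSum (by omega : p ≠ 2)
  linear_combination 2 * hcas - (centralBinomSum (ZMod p) p).eval 0 * hpred + leg3 p * hneg_one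

lemma eval_zero_derivative_centralBinomSum (hp5 : 5 ≤ p) :
    (derivative (centralBinomSum (ZMod p) p)).eval 0 = 0 := by
  have h := eval_neg_derivative_centralBinomSum (p := p) (by omega) 0
  rw [neg_zero] at h
  exact (mul_eq_zero.1 (by linear_combination h :
    2 * (derivative (centralBinomSum (ZMod p) p)).eval 0 = 0)).resolve_left
      (two_ne_zero_of_ne_two (by omega))

lemma eval_neg_one_derivative_centralBinomSum (hp5 : 5 ≤ p) :
    (derivative (centralBinomSum (ZMod p) p)).eval (-1) = 0 := by
  have hinv : ∀ k ∈ range (p - 1), (hexSeq (k + 1) : ZMod p) * ((k : ZMod p) + 1) ^ (p - 2) =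
      hexSeq (k + 1) / (k + 1) := fun k hk => by
    have hk : (k : ZMod p) + 1 ≠ 0 := natCast_succ_ne_zero (by rw [mem_range] at hk; omega)
    rw [eq_div_iff hk, mul_assoc, ← pow_succ, show p - 2 + 1 = p - 1 by omega,
      ZMod.pow_card_sub_one_eq_one hk, mul_one]
  have hcas := (threeTerm_derivative_centralBinomSum (p := p)).casoratian_hexSeq_pred
  rw [sum_congr rfl hinv, sum_hexSeq_div_eq_zero hp5,
    hexSeq_of_coprime_six (coprime_six_of_prime hp5), eval_zero_derivative_centralBinomSum hp5,
    mul_zero, zero_sub, neg_zero, add_zero, neg_eq_zero] at hcas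
  exact (mul_eq_zero.1 hcas).resolve_left intCast_leg3_ne_zero

lemma eval_neg_two_centralBinomSum :
    (centralBinomSum (ZMod p) p).eval (-2) =
      (centralBinomSum (ZMod p) p).eval (-1) - (centralBinomSum (ZMod p) p).eval 0 := by
  have h := threeTerm_centralBinomSum (-1 : ZMod p)
  simp only [neg_add_cancel, neg_one_pow_pred, show (-1 : ZMod p) - 1 = -2 by ring] at h
  linear_combination h

lemma eval_neg_two_derivative_centralBinomSum (hp5 : 5 ≤ p) :
    (derivative (centralBinomSum (ZMod p) p)).eval (-2) = -1 := by
  have h := threeTerm_derivative_centralBinomSum (-1 : ZMod p)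
  simp only [neg_add_cancel, neg_one_pow_sub_two,
    show (-1 : ZMod p) - 1 = -2 by ring, eval_zero_derivative_centralBinomSum hp5,
    eval_neg_one_derivative_centralBinomSum hp5] at h
  linear_combination h

lemma X_sub_one_mul_catalanSum_pred :
    (X - 1) * catalanSum (ZMod p) (p - 1) = (centralBinomSum (ZMod p) p).comp (X - 2) -
      centralBinomSum (ZMod p) p - (X - 1) ^ (p - 1) := by
  have h := X_sub_one_mul_catalanSum (natCast_factorial_pred_ne_zero (p := p))
  rw [Nat.sub_add_cancel (Fact.out : p.Prime).one_le, centralBinomPoly_pred] at h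
  linear_combination h

lemma eval_zero_derivative_catalanSum_pred :
    (derivative (catalanSum (ZMod p) (p - 1))).eval 0 =
      (centralBinomSum (ZMod p) p).eval 0 - (centralBinomSum (ZMod p) p).eval (-2) +
        (derivative (centralBinomSum (ZMod p) p)).eval 0 -
        (derivative (centralBinomSum (ZMod p) p)).eval (-2) + 2 := by
  have hval := congrArg (eval 0) (X_sub_one_mul_catalanSum_pred (p := p))
  simp only [eval_sub, eval_mul, eval_comp, eval_X, eval_one, eval_pow, eval_ofNat, zero_sub,
    neg_one_pow_pred] at hval
  have hder := congrArg (fun f => (derivative f).eval 0) (X_sub_one_mul_catalanSum_pred (p := p))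
  simp only [derivative_mul, derivative_sub, derivative_comp, derivative_X, derivative_one,
    derivative_ofNat, derivative_pow, eval_add, eval_sub, eval_mul, eval_comp, eval_X, eval_one,
    eval_pow, eval_ofNat, sub_zero, one_mul, zero_sub, C_neg, C_1, natCast_pred, eval_neg,
    Nat.sub_sub, one_add_one_eq_two, neg_one_pow_sub_two] at hder
  linear_combination -hval - hder

lemma two_mul_eval_zero_derivative_catalanSum_pred (hp5 : 5 ≤ p) :
    2 * (derivative (catalanSum (ZMod p) (p - 1))).eval 0 = 5 + 3 * leg3 p := by
  rw [eval_zero_derivative_catalanSum_pred, eval_neg_two_centralBinomSum,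
    eval_zero_derivative_centralBinomSum hp5, eval_neg_two_derivative_centralBinomSum hp5]
  linear_combination 3 * eval_zero_centralBinomSum hp5 -
    two_mul_eval_neg_one_centralBinomSum (by omega : p ≠ 2)

end FiniteField

end CatalanHarmonic

theorem sum_catalan_harmonic (p : ℕ) (hp : p.Prime) (hp5 : 5 ≤ p) :
    ratCongr p 1
      (∑ k ∈ Finset.range (p - 1), ((2 * k).choose k : ℚ) / (k + 1) * (H (2 * k) - H k))
      (5 / 2 + 3 / 2 * (leg3 p : ℚ)) := by
  have : Fact p.Prime := ⟨hp⟩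
  have h2 : (2 : ZMod p) ≠ 0 := CatalanHarmonic.two_ne_zero_of_ne_two (by omega)
  rw [← CatalanHarmonic.eval_zero_derivative_catalanSum_rat]
  refine CatalanHarmonic.ratCongr_of_mem_reductionGraph
    (CatalanHarmonic.eval_zero_derivative_catalanSum_mem_reductionGraph
      (Nat.sub_one_lt hp.ne_zero))
    ⟨5 + 3 * leg3 p, 2, by exact_mod_cast h2, Prod.ext ?_ ?_⟩
  · push_cast
    ring
  · push_cast
    rw [eq_div_iff h2, mul_comm, CatalanHarmonic.two_mul_eval_zero_derivative_catalanSum_pred hp5]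
end

section
/- Let p ≥ 5 be a prime. Then ∑_{k=0}^{p-2} C(2k,k)/(k+1) ≡ (3/2)·(p/3) + 1/2 + 2p (mod p²), as a congruence of rational numbers, where (p/3) denotes the Legendre symbol of p modulo 3. -/
/-!
Let `χ` be the quadratic character modulo 3; it satisfies `χ k + χ (k + 1) + χ (k + 2) = 0`.
Pascal's rule applied twice and this recurrence give
`∑_{k < n} C(2k, k) = ∑_{j ≤ n} χ(j) C(2n, n + j)`. For a prime `n = p`, Vandermonde's identity
gives `C(2p, p + j) ≡ 2 C(p, j) (mod p²)` when `j < p`, and `∑_{j < p} χ(j) C(p, j) = 0` when `p`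
is odd, so only the term `j = p` survives: `∑_{k < p} C(2k, k) ≡ χ(p) (mod p²)`.
The Catalan numbers `C_k` are reached through `C(2k + 2, k + 1) + 2 C_k = 4 C(2k, k)`, and the
central binomial coefficient left over at the end of the range is `p C_{p - 1} ≡ -p (mod p²)`.
-/

open Finset

local notation "χ₃" => quadraticChar (ZMod 3)

lemma choose_add_two_add_two (n k : ℕ) :
    (n + 2).choose (k + 2) = n.choose k + 2 * n.choose (k + 1) + n.choose (k + 2) := by
  simp only [Nat.choose_succ_succ']
  ring

section Recurrence

variable {R : Type*} [CommRing R] {c : ℕ → R}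

lemma sum_range_mul_add_add_eq (hc : ∀ k, c k + c (k + 1) + c (k + 2) = 0) (a : ℕ → R) (n : ℕ) :
    ∑ j ∈ range n, c (j + 1) * (a j + a (j + 1) + a (j + 2)) =
      (c 1 * a 0 - c 0 * a 1) - (c (n + 1) * a n - c n * a (n + 1)) := by
  rw [← sum_range_sub' (fun j ↦ c (j + 1) * a j - c j * a (j + 1))]
  refine sum_congr rfl fun j _ ↦ ?_
  linear_combination a (j + 1) * hc j

lemma sum_mul_choose_add_eq_mul_sum_centralBinom (hc : ∀ k, c k + c (k + 1) + c (k + 2) = 0)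
    (h₀ : c 0 = 0) (n : ℕ) :
    ∑ j ∈ range (n + 1), c j * (2 * n).choose (n + j) =
      c 1 * ∑ k ∈ range n, (k.centralBinom : R) := by
  induction n with
  | zero => simp [h₀]
  | succ n ih =>
    let a (j : ℕ) : R := (2 * n).choose (n + j)
    have ha {j : ℕ} (hj : n < j) : a j = 0 := by
      simp only [a, Nat.choose_eq_zero_of_lt (show 2 * n < n + j by omega), Nat.cast_zero]
    have pascal (j : ℕ) : ((2 * (n + 1)).choose (n + 1 + (j + 1)) : R) =
        (a j + a (j + 1) + a (j + 2)) + a (j + 1) := by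
      rw [show n + 1 + (j + 1) = n + j + 2 by ring, mul_add_one, choose_add_two_add_two]
      push_cast [a, ← add_assoc]
      ring
    have shift : ∑ j ∈ range (n + 1), c (j + 1) * a (j + 1) = ∑ j ∈ range (n + 1), c j * a j := by
      have h := sum_range_succ' (fun j ↦ c j * a j) (n + 1)
      rw [sum_range_succ, ha n.lt_succ_self, h₀] at h
      simpa using h.symm
    calc ∑ j ∈ range (n + 1 + 1), c j * ((2 * (n + 1)).choose (n + 1 + j) : R)
        = ∑ j ∈ range (n + 1), c (j + 1) * (a j + a (j + 1) + a (j + 2)) +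
            ∑ j ∈ range (n + 1), c (j + 1) * a (j + 1) := by
          rw [sum_range_succ', h₀, zero_mul, add_zero, ← sum_add_distrib]
          simp only [pascal, ← mul_add]
      _ = c 1 * a 0 + c 1 * ∑ k ∈ range n, (k.centralBinom : R) := by
          rw [sum_range_mul_add_add_eq hc, shift, ih, h₀, ha n.lt_succ_self,
            ha (n.lt_succ_self.trans (n + 1).lt_succ_self)]
          ring
      _ = c 1 * ∑ k ∈ range (n + 1), (k.centralBinom : R) := by
          rw [sum_range_succ, mul_add, add_comm]
          rfl

-- With `E` the shift operator, this is `(1 + E) ^ n = (-E ^ 2) ^ n`.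
lemma sum_choose_mul_eq_neg_one_pow_mul (hc : ∀ k, c k + c (k + 1) + c (k + 2) = 0) (n s : ℕ) :
    ∑ j ∈ range (n + 1), (n.choose j : R) * c (j + s) = (-1) ^ n * c (2 * n + s) := by
  induction n generalizing s with
  | zero => simp
  | succ n ih =>
    rw [sum_choose_succ_mul (fun j _ ↦ c (j + s)), ← sum_add_distrib]
    calc ∑ j ∈ range (n + 1), ((n.choose j : R) * c (j + s) + n.choose j * c (j + 1 + s))
        = -∑ j ∈ range (n + 1), (n.choose j : R) * c (j + (s + 2)) := by
          rw [← sum_neg_distrib]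
          refine sum_congr rfl fun j _ ↦ ?_
          rw [show j + 1 + s = j + s + 1 by ring, ← add_assoc j s 2]
          linear_combination (n.choose j : R) * hc (j + s)
      _ = (-1) ^ (n + 1) * c (2 * (n + 1) + s) := by
          rw [ih, show 2 * n + (s + 2) = 2 * (n + 1) + s by ring]
          ring

end Recurrence

lemma quadraticChar_zmod_three_recurrence (k : ℕ) :
    χ₃ k + χ₃ (k + 1 : ℕ) + χ₃ (k + 2 : ℕ) = 0 := by
  have h : ∀ a : ZMod 3, χ₃ a + χ₃ (a + 1) + χ₃ (a + 2) = 0 := by decide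
  exact_mod_cast h k

lemma quadraticChar_zmod_three_eq_leg3 {n : ℕ} (hn : ¬ 3 ∣ n) : χ₃ n = leg3 n := by
  have h : n % 3 = 1 ∨ n % 3 = 2 := by omega
  rw [← ZMod.natCast_mod, leg3]
  rcases h with h | h <;> rw [h] <;> decide

lemma sum_range_choose_mul_quadraticChar_of_odd {n : ℕ} (hn : Odd n) :
    ∑ j ∈ range n, (n.choose j : ℤ) * χ₃ j = 0 := by
  have h₂ : χ₃ (2 * n : ℕ) = -χ₃ n := by
    rw [Nat.cast_mul, map_mul, show χ₃ (2 : ℕ) = -1 by decide, neg_one_mul]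
  have h := sum_choose_mul_eq_neg_one_pow_mul quadraticChar_zmod_three_recurrence n 0
  simp only [sum_range_succ, add_zero, Nat.choose_self, Nat.cast_one, one_mul, hn.neg_one_pow, h₂,
    neg_one_mul, neg_neg] at h
  exact add_eq_right.1 h

lemma choose_two_mul_add_modEq {p j : ℕ} (hp : p.Prime) (hj : j < p) :
    ((2 * p).choose (p + j) : ℤ) ≡ 2 * p.choose j [ZMOD p ^ 2] := by
  have vandermonde : ((2 * p).choose (p + j) : ZMod (p ^ 2)) =
      ∑ ik ∈ antidiagonal (p + j), ((p.choose ik.1 * p.choose ik.2 : ℕ) : ZMod (p ^ 2)) := by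
    rw [two_mul, Nat.add_choose_eq, Nat.cast_sum]
  have vanish : ∀ ik ∈ antidiagonal (p + j), ik ≠ (p, j) ∧ ik ≠ (j, p) →
      ((p.choose ik.1 * p.choose ik.2 : ℕ) : ZMod (p ^ 2)) = 0 := by
    rintro ⟨i, k⟩ hik hne
    rw [HasAntidiagonal.mem_antidiagonal] at hik
    simp only [ne_eq, Prod.mk.injEq] at hne
    rw [ZMod.natCast_eq_zero_iff]
    rcases lt_or_ge p i with hi | hi
    · simp [Nat.choose_eq_zero_of_lt hi]
    rcases lt_or_ge p k with hk | hk
    · simp [Nat.choose_eq_zero_of_lt hk]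
    rw [sq]
    exact mul_dvd_mul (hp.dvd_choose_self (by omega) (by omega))
      (hp.dvd_choose_self (by omega) (by omega))
  rw [← Nat.cast_pow, ← ZMod.intCast_eq_intCast_iff]
  simp only [Int.cast_natCast, Int.cast_mul, Int.cast_ofNat]
  rw [vandermonde, sum_eq_add_of_mem (p, j) (j, p) (by simp) (by simp [add_comm])
    (by simp [hj.ne']) vanish]
  simp only [Nat.choose_self, one_mul, mul_one, two_mul]

lemma sum_range_centralBinom_modEq {p : ℕ} (hp : p.Prime) :
    ∑ k ∈ range p, (k.centralBinom : ℤ) ≡ χ₃ p [ZMOD p ^ 2] := by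
  rcases hp.eq_two_or_odd' with rfl | hodd
  · decide
  calc ∑ k ∈ range p, (k.centralBinom : ℤ)
      = ∑ j ∈ range p, χ₃ j * ((2 * p).choose (p + j) : ℤ) + χ₃ p := by
        have h := sum_mul_choose_add_eq_mul_sum_centralBinom
          quadraticChar_zmod_three_recurrence (by simp) p
        simpa [sum_range_succ, ← two_mul] using h.symm
    _ ≡ ∑ j ∈ range p, χ₃ j * (2 * p.choose j) + χ₃ p [ZMOD p ^ 2] :=
        (Int.ModEq.sum fun j hj ↦
          (choose_two_mul_add_modEq hp (mem_range.1 hj)).mul_left _).add_right _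
    _ = 2 * ∑ j ∈ range p, (p.choose j : ℤ) * χ₃ j + χ₃ p := by
        rw [mul_sum]
        exact congrArg (· + _) (sum_congr rfl fun j _ ↦ by ring)
    _ = χ₃ p := by rw [sum_range_choose_mul_quadraticChar_of_odd hodd, mul_zero, zero_add]

lemma centralBinom_succ_eq_mul_catalan (n : ℕ) :
    (n + 1).centralBinom = 2 * (2 * n + 1) * catalan n := by
  refine Nat.eq_of_mul_eq_mul_left n.succ_pos ?_
  rw [Nat.succ_eq_add_one, Nat.succ_mul_centralBinom_succ, ← succ_mul_catalan_eq_centralBinom]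
  ring

lemma two_mul_sum_range_catalan_add_centralBinom (n : ℕ) :
    2 * ∑ k ∈ range n, catalan k + n.centralBinom = 3 * ∑ k ∈ range n, k.centralBinom + 1 := by
  induction n with
  | zero => simp
  | succ n ih =>
    rw [sum_range_succ, sum_range_succ, centralBinom_succ_eq_mul_catalan]
    have h := succ_mul_catalan_eq_centralBinom n
    linarith

lemma mul_catalan_eq_choose (n : ℕ) : n * catalan n = (2 * n).choose (n + 1) := by
  refine Nat.eq_of_mul_eq_mul_left n.succ_pos ?_
  rw [Nat.succ_eq_add_one, mul_left_comm, succ_mul_catalan_eq_centralBinom, mul_comm (n + 1),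
    Nat.choose_succ_right_eq, Nat.centralBinom, mul_comm, two_mul, Nat.add_sub_cancel]

lemma catalan_pred_modEq_neg_one {p : ℕ} (hp : p.Prime) :
    (catalan (p - 1) : ℤ) ≡ -1 [ZMOD p] := by
  have : Fact p.Prime := ⟨hp⟩
  obtain ⟨q, rfl⟩ := Nat.exists_eq_add_of_le' hp.two_le
  have lucas : ((2 * (q + 1)).choose (q + 2) : ℤ) ≡ 1 [ZMOD (q + 2 : ℕ)] := by
    have h := Choose.choose_modEq_choose_mod_mul_choose_div
      (n := 2 * (q + 1)) (k := q + 2) (p := q + 2)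
    rw [show 2 * (q + 1) = q + (q + 2) by ring] at h ⊢
    simpa [Nat.mod_eq_of_lt, Nat.div_eq_of_lt] using h
  rw [← mul_catalan_eq_choose] at lucas
  calc (catalan (q + 1) : ℤ)
      = (q + 2 : ℕ) * catalan (q + 1) - ((q + 1) * catalan (q + 1) : ℕ) := by
        push_cast
        ring
    _ ≡ 0 - 1 [ZMOD (q + 2 : ℕ)] := (Int.modEq_zero_iff_dvd.2 (dvd_mul_right _ _)).sub lucas
    _ = -1 := zero_sub 1

lemma centralBinom_pred_modEq_neg {p : ℕ} (hp : p.Prime) :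
    ((p - 1).centralBinom : ℤ) ≡ -p [ZMOD p ^ 2] := by
  have h : p * catalan (p - 1) = (p - 1).centralBinom := by
    simpa only [Nat.sub_add_cancel hp.one_le] using succ_mul_catalan_eq_centralBinom (p - 1)
  simpa only [← h, Nat.cast_mul, mul_neg_one, sq] using (catalan_pred_modEq_neg_one hp).mul_left'

theorem two_mul_sum_range_catalan_modEq {p : ℕ} (hp : p.Prime) :
    2 * ∑ k ∈ range (p - 1), (catalan k : ℤ) ≡ 3 * χ₃ p + 1 + 4 * p [ZMOD p ^ 2] := by
  have hsum := sum_range_succ (fun k ↦ (k.centralBinom : ℤ)) (p - 1)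
  rw [Nat.sub_add_cancel hp.one_le] at hsum
  have hcat : 2 * ∑ k ∈ range (p - 1), (catalan k : ℤ) + (p - 1).centralBinom =
      3 * ∑ k ∈ range (p - 1), (k.centralBinom : ℤ) + 1 := by
    exact_mod_cast two_mul_sum_range_catalan_add_centralBinom (p - 1)
  calc 2 * ∑ k ∈ range (p - 1), (catalan k : ℤ)
      = 3 * ∑ k ∈ range p, (k.centralBinom : ℤ) + 1 - 4 * (p - 1).centralBinom := by
        linear_combination hcat - 3 * hsum
    _ ≡ 3 * χ₃ p + 1 - 4 * (-p) [ZMOD p ^ 2] := by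
        gcongr
        · exact sum_range_centralBinom_modEq hp
        · exact centralBinom_pred_modEq_neg hp
    _ = 3 * χ₃ p + 1 + 4 * p := by ring

lemma choose_div_eq_catalan (k : ℕ) : ((2 * k).choose k : ℚ) / (k + 1) = catalan k := by
  rw [div_eq_iff k.cast_add_one_ne_zero, ← Nat.centralBinom_eq_two_mul_choose, mul_comm]
  exact_mod_cast (succ_mul_catalan_eq_centralBinom k).symm

lemma ratCongr_of_mul_modEq {p m : ℕ} {d x y : ℤ} {a b : ℚ} (hd : ¬ (p : ℤ) ∣ d)
    (hx : d * a = x) (hy : d * b = y) (hxy : x ≡ y [ZMOD p ^ m]) : ratCongr p m a b := by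
  obtain ⟨s, hs⟩ := hxy.symm.dvd
  have hs' : (x - y : ℚ) = p ^ m * s := by exact_mod_cast hs
  exact ⟨s, d, hd, by linear_combination hx - hy + hs'⟩

theorem truncated_catalan_sum (p : ℕ) (hp : p.Prime) (hp5 : 5 ≤ p) :
    ratCongr p 2
      (∑ k ∈ Finset.range (p - 1), ((2 * k).choose k : ℚ) / (k + 1))
      (3 / 2 * (leg3 p : ℚ) + 1 / 2 + 2 * p) := by
  have hp2 : ¬ (p : ℤ) ∣ 2 := by
    exact_mod_cast Nat.not_dvd_of_pos_of_lt two_pos (show 2 < p by omega)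
  have hp3 : ¬ 3 ∣ p := by
    rw [Nat.prime_dvd_prime_iff_eq Nat.prime_three hp]
    omega
  have h := two_mul_sum_range_catalan_modEq hp
  rw [quadraticChar_zmod_three_eq_leg3 hp3] at h
  refine ratCongr_of_mul_modEq hp2 ?_ ?_ h
  · simp only [choose_div_eq_catalan]
    push_cast
    rfl
  · push_cast
    ring
end
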